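/- arXiv:1509.02803 — 3 statements merged into one kernel-verified Lean document; each statement's English description precedes it below -/
import Mathlib

section
/- There is an absolute constant c > 0 with the following property. Let p ∈ [1, ∞), σ, M > 0, and let f : ℝ → ℂ be bandlimited with parameters (σ, M). Then for all bounded self-adjoint operators A and B on a complex Hilbert space, (Σ_{j∈ℕ} s_j(f(A) − f(B))^p)^{1/p} ≤ c·σ·M·(Σ_{j∈ℕ} s_j(A − B)^p)^{1/p} (both sides computed in [0, ∞]). In particular, if A − B belongs to the Schatten class S_p then so does f(A) − f(B). -/
open scoped ENNReal

/-- The `j`-th singular value of a bounded operator `T`: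
`s_j(T) = inf { ‖T − R‖ : rank R ≤ j }`. -/
noncomputable def singularValue {H : Type*} [NormedAddCommGroup H]
    [InnerProductSpace ℂ H] (T : H →L[ℂ] H) (j : ℕ) : ℝ :=
  sInf {r : ℝ | ∃ R : H →L[ℂ] H,
    Module.rank ℂ (LinearMap.range (R : H →ₗ[ℂ] H)) ≤ (j : Cardinal) ∧ r = ‖T - R‖}

section SV
variable {H : Type*} [NormedAddCommGroup H] [InnerProductSpace ℂ H]

lemma sv_bdd (T : H →L[ℂ] H) (j : ℕ) : BddBelow {r : ℝ | ∃ R : H →L[ℂ] H,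
    Module.rank ℂ (LinearMap.range (R : H →ₗ[ℂ] H)) ≤ (j : Cardinal) ∧ r = ‖T - R‖} := by
  refine ⟨0, ?_⟩
  rintro r ⟨R, -, rfl⟩
  positivity

lemma sv_nonempty (T : H →L[ℂ] H) (j : ℕ) : Set.Nonempty {r : ℝ | ∃ R : H →L[ℂ] H,
    Module.rank ℂ (LinearMap.range (R : H →ₗ[ℂ] H)) ≤ (j : Cardinal) ∧ r = ‖T - R‖} := by
  refine ⟨_, 0, ?_, rfl⟩
  simp

lemma sv_nonneg (T : H →L[ℂ] H) (j : ℕ) : 0 ≤ singularValue T j := by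
  apply Real.sInf_nonneg
  rintro r ⟨R, -, rfl⟩
  positivity

lemma sv_le (T R : H →L[ℂ] H) (j : ℕ)
    (h : Module.rank ℂ (LinearMap.range (R : H →ₗ[ℂ] H)) ≤ (j : Cardinal)) :
    singularValue T j ≤ ‖T - R‖ :=
  csInf_le (sv_bdd T j) ⟨R, h, rfl⟩

lemma sv_exists (T : H →L[ℂ] H) (j : ℕ) {b : ℝ} (h : singularValue T j < b) :
    ∃ R : H →L[ℂ] H, Module.rank ℂ (LinearMap.range (R : H →ₗ[ℂ] H)) ≤ (j : Cardinal) ∧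
      ‖T - R‖ < b := by
  obtain ⟨r, ⟨R, hR, rfl⟩, hr⟩ := exists_lt_of_csInf_lt (sv_nonempty T j) h
  exact ⟨R, hR, hr⟩

lemma sv_ge (T : H →L[ℂ] H) (j : ℕ) {b : ℝ}
    (h : ∀ R : H →L[ℂ] H, Module.rank ℂ (LinearMap.range (R : H →ₗ[ℂ] H)) ≤ (j : Cardinal) →
      b ≤ ‖T - R‖) : b ≤ singularValue T j := by
  apply le_csInf (sv_nonempty T j)
  rintro r ⟨R, hR, rfl⟩
  exact h R hR

lemma sv_antitone (T : H →L[ℂ] H) : Antitone (singularValue T) := by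
  intro i j hij
  apply sv_ge
  intro R hR
  exact sv_le _ _ _ (hR.trans (by exact_mod_cast hij))

lemma greedy (T : H →L[ℂ] H) (n : ℕ) (hpos : ∀ i < n, 0 < singularValue T (2 * i)) :
    ∃ e g : ℕ → H, (∀ i < n, ∀ j < n, inner ℂ (e i) (e j) = if i = j then (1:ℂ) else 0) ∧
      (∀ i < n, ∀ j < n, inner ℂ (g i) (g j) = if i = j then (1:ℂ) else 0) ∧
      ∀ i < n, singularValue T (2 * i) / 2 ≤ ‖inner ℂ (g i) (T (e i))‖ := by
  classical
  induction n with
  | zero => exact ⟨0, 0, by simp, by simp, by simp⟩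
  | succ n ih =>
    obtain ⟨e, g, he, hg, hT⟩ := ih (fun i hi => hpos i (by omega))
    have hs := hpos n (by omega)
    set s := singularValue T (2 * n) with hsdef
    set V : Submodule ℂ H := Submodule.span ℂ ((Finset.range n).image e : Finset H) with hV
    set W : Submodule ℂ H := Submodule.span ℂ ((Finset.range n).image g : Finset H) with hW
    let P := V.starProjection
    let Q := W.starProjection
    let S : H →L[ℂ] H := (1 - Q) ∘L T ∘L (1 - P)
    have hSnorm : s ≤ ‖S‖ := by
      have : S = T - (T - S) := by abel
      rw [this]
      apply sv_le
      have hsub : LinearMap.range ((T - S : H →L[ℂ] H) : H →ₗ[ℂ] H) ≤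
          Submodule.span ℂ ((Finset.range n).image g ∪ (Finset.range n).image (fun i => T (e i)) :
            Finset H) := by
        rintro _ ⟨x, rfl⟩
        have h1 : (T - S) x = Q (T (x - P x)) + T (P x) := by
          simp [S, map_sub]
          abel
        have : ((T - S : H →L[ℂ] H) : H →ₗ[ℂ] H) x = (T - S) x := rfl
        rw [this, h1]
        apply Submodule.add_mem
        · have : Q (T (x - P x)) ∈ W := Submodule.starProjection_apply_mem _ _
          exact Submodule.span_mono (by simp) this
        · have h2 : P x ∈ V := Submodule.starProjection_apply_mem _ _
          have h3 : T (P x) ∈ V.map (T : H →ₗ[ℂ] H) := ⟨_, h2, rfl⟩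
          rw [hV, Submodule.map_span] at h3
          refine Submodule.span_mono ?_ h3
          intro y hy
          simp only [Finset.coe_image, Set.mem_image] at hy
          obtain ⟨_, ⟨i, hi, rfl⟩, rfl⟩ := hy
          simp only [Finset.coe_union, Finset.coe_image]
          right
          exact ⟨i, hi, rfl⟩
      refine (Submodule.rank_mono hsub).trans ((rank_span_finset_le _).trans ?_)
      norm_cast
      refine (Finset.card_union_le _ _).trans ?_
      have h1 := Finset.card_image_le (s := Finset.range n) (f := g)
      have h2 := Finset.card_image_le (s := Finset.range n) (f := fun i => T (e i))
      simp at h1 h2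
      omega
    have : ∃ x, s / 2 * ‖x‖ < ‖S x‖ := by
      by_contra! hcon
      have := S.opNorm_le_bound (by positivity) hcon
      linarith
    obtain ⟨x, hx⟩ := this
    set y := x - P x with hy
    set w := T y - Q (T y) with hw
    have hSx : S x = w := by simp [S, hw, hy]
    rw [hSx] at hx
    have hyx : ‖y‖ ≤ ‖x‖ := by
      have h1 : y = Vᗮ.starProjection x := by
        rw [Submodule.starProjection_orthogonal']; rfl
      rw [h1]
      exact Submodule.norm_starProjection_apply_le _ _
    have hw0 : 0 < ‖w‖ := lt_of_le_of_lt (by positivity) hx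
    have hy0 : 0 < ‖y‖ := by
      rw [norm_pos_iff]
      intro h0
      rw [hw, h0] at hw0
      simp at hw0
    have hyV : ∀ i < n, inner ℂ (e i) y = 0 := by
      intro i hi
      have : y ∈ Vᗮ := V.sub_starProjection_mem_orthogonal x
      exact this _ (Submodule.subset_span (by simpa using ⟨i, hi, rfl⟩))
    have hwW : ∀ z ∈ W, inner ℂ z w = 0 := by
      intro z hz
      have : w ∈ Wᗮ := W.sub_starProjection_mem_orthogonal (T y)
      exact this _ hz
    have hwg : ∀ i < n, inner ℂ (g i) w = 0 := fun i hi =>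
      hwW _ (Submodule.subset_span (by simpa using ⟨i, hi, rfl⟩))
    have key : ∀ (u : ℕ → H) (v : H), 0 < ‖v‖ → (∀ i < n, inner ℂ (u i) v = 0) →
        (∀ i < n, ∀ j < n, inner ℂ (u i) (u j) = if i = j then (1:ℂ) else 0) →
        (∀ i < n + 1, ∀ j < n + 1,
          inner ℂ (Function.update u n (((‖v‖⁻¹ : ℝ) : ℂ) • v) i)
            (Function.update u n (((‖v‖⁻¹ : ℝ) : ℂ) • v) j) = if i = j then (1:ℂ) else 0) := by
      intro u v hv huv hu i hi j hj
      rcases Nat.lt_succ_iff_lt_or_eq.mp hi with hi | rfl <;>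
        rcases Nat.lt_succ_iff_lt_or_eq.mp hj with hj | rfl
      · rw [Function.update_of_ne hi.ne, Function.update_of_ne hj.ne, hu i hi j hj]
      · rw [Function.update_of_ne hi.ne, Function.update_self, inner_smul_right, huv i hi,
          if_neg hi.ne, mul_zero]
      · rw [Function.update_of_ne hj.ne, Function.update_self, inner_smul_left,
          ← inner_conj_symm, huv j hj, if_neg hj.ne']
        simp
      · rw [Function.update_self, inner_smul_left, inner_smul_right, inner_self_eq_norm_sq_to_K,
          if_pos rfl]
        have : (‖v‖ : ℂ) ≠ 0 := by exact_mod_cast hv.ne'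
        simp
        field_simp
    refine ⟨Function.update e n (((‖y‖⁻¹ : ℝ) : ℂ) • y), Function.update g n (((‖w‖⁻¹ : ℝ) : ℂ) • w),
      key e y hy0 hyV he, key g w hw0 hwg hg, ?_⟩
    intro i hi
    rcases Nat.lt_succ_iff_lt_or_eq.mp hi with hi | rfl
    · rw [Function.update_of_ne hi.ne, Function.update_of_ne hi.ne]
      exact hT i hi
    · rw [Function.update_self, Function.update_self, map_smul, inner_smul_left, inner_smul_right]
      have h1 : inner ℂ w (T y) = (‖w‖ : ℂ) ^ 2 := by
        have : T y = w + Q (T y) := by simp [hw]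
        rw [this, inner_add_right, inner_self_eq_norm_sq_to_K, ← inner_conj_symm,
          hwW (Q (T y)) (Submodule.starProjection_apply_mem _ _)]
        simp
      rw [h1]
      simp
      rw [show ‖w‖⁻¹ * (‖y‖⁻¹ * ‖w‖ ^ 2) = ‖w‖ / ‖y‖ by field_simp, le_div_iff₀ hy0]
      have : s / 2 * ‖y‖ ≤ s / 2 * ‖x‖ := by gcongr
      linarith

end SV

section Spec
variable {H : Type*} [NormedAddCommGroup H] [InnerProductSpace ℂ H]

lemma spec_approx [CompleteSpace H] (K : H →L[ℂ] H) (hK : IsSelfAdjoint K) (δ : ℝ) (j : ℕ)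
    (hj : singularValue K j < δ) :
    ∃ (n : ℕ) (u : Fin n → H) (l : Fin n → ℝ), Orthonormal ℂ u ∧
      ∀ x, ‖K x - ∑ m, (l m : ℂ) • (inner ℂ (u m) x • u m)‖ ≤ 2 * δ * ‖x‖ := by
  obtain ⟨R, hR, hRn⟩ := sv_exists K j hj
  set V : Submodule ℂ H := LinearMap.range (R : H →ₗ[ℂ] H) with hV
  have : FiniteDimensional ℂ V := by
    rw [FiniteDimensional, ← Module.rank_lt_aleph0_iff]
    exact hR.trans_lt (Cardinal.natCast_lt_aleph0)
  let P : H →L[ℂ] H := V.starProjection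
  have hP : IsSelfAdjoint P := isSelfAdjoint_starProjection V
  have hδ : 0 ≤ δ := (norm_nonneg _).trans hRn.le
  have h1P : ∀ y, ‖y - P y‖ ≤ ‖y‖ := by
    intro y
    have h1 : y - P y = Vᗮ.starProjection y := by
      rw [Submodule.starProjection_orthogonal']; rfl
    rw [h1]
    exact Submodule.norm_starProjection_apply_le _ _
  have hN1 : ‖(1 - P) * K‖ ≤ δ := by
    apply ContinuousLinearMap.opNorm_le_bound _ hδ
    intro x
    have h1 : ((1 - P) * K) x = (K - R) x - P ((K - R) x) := by
      have : P (R x) = R x := Submodule.starProjection_eq_self_iff.mpr ⟨x, rfl⟩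
      simp [this]
    rw [h1]
    refine (h1P _).trans (((K - R).le_opNorm x).trans ?_)
    gcongr
  have hN2 : ‖K * (1 - P)‖ ≤ δ := by
    have : star ((1 - P) * K) = K * (1 - P) := by
      rw [star_mul, star_sub, hP.star_eq, hK.star_eq, star_one]
    rw [← this, norm_star]; exact hN1
  let T : V →ₗ[ℂ] V := (V.orthogonalProjectionOnto : H →ₗ[ℂ] V) ∘ₗ (K : H →ₗ[ℂ] H) ∘ₗ V.subtype
  have hT : T.IsSymmetric := by
    intro x y
    simp only [T, LinearMap.comp_apply, ContinuousLinearMap.coe_coe, Submodule.subtype_apply]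
    rw [Submodule.inner_orthogonalProjectionOnto_eq_of_mem_right,
      Submodule.inner_orthogonalProjectionOnto_eq_of_mem_left]
    have := (ContinuousLinearMap.isSelfAdjoint_iff_isSymmetric.mp hK) (x : H) (y : H)
    exact this
  let b := hT.eigenvectorBasis (n := Module.finrank ℂ V) rfl
  let l := hT.eigenvalues (n := Module.finrank ℂ V) rfl
  refine ⟨_, fun m => (b m : H), l, ?_, ?_⟩
  · exact b.orthonormal.comp_linearIsometry V.subtypeₗᵢ
  intro x
  have hsum : (∑ m, (l m : ℂ) • (inner ℂ (b m : H) x • (b m : H))) = P (K (P x)) := by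
    have h1 : P (K (P x)) = (T (V.orthogonalProjectionOnto x) : V) := rfl
    rw [h1, ← b.sum_repr (V.orthogonalProjectionOnto x), map_sum]
    simp only [map_smul]
    push_cast
    refine Finset.sum_congr rfl fun m _ => ?_
    have h2 : T (b m) = (l m : ℂ) • b m := hT.apply_eigenvectorBasis rfl m
    rw [h2, b.repr_apply_apply, Submodule.inner_orthogonalProjectionOnto_eq_of_mem_left]
    push_cast
    rw [smul_comm]
  rw [hsum]
  have h3 : K x - P (K (P x)) = ((1 - P) * K) x + P ((K * (1 - P)) x) := by
    simp [map_sub]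
  rw [h3]
  have h4 := ((1 - P) * K).le_of_opNorm_le hN1 x
  have h5 := (K * (1 - P)).le_of_opNorm_le hN2 x
  have h6 : ‖P ((K * (1 - P)) x)‖ ≤ ‖(K * (1 - P)) x‖ :=
    Submodule.norm_starProjection_apply_le _ _
  refine (norm_add_le _ _).trans ?_
  linarith

lemma orth_norm_sq {ι : Type*} {u : ι → H} (hu : Orthonormal ℂ u) (s : Finset ι) (c : ι → ℂ) :
    ‖∑ i ∈ s, c i • u i‖ ^ 2 = ∑ i ∈ s, ‖c i‖ ^ 2 := by
  have h := hu.inner_sum c c s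
  rw [inner_self_eq_norm_sq_to_K] at h
  have h2 : ∀ i, (starRingEnd ℂ) (c i) * c i = ((‖c i‖ ^ 2 : ℝ) : ℂ) := by
    intro i; rw [Complex.conj_mul']; push_cast; rfl
  simp only [h2] at h
  apply Complex.ofReal_injective
  push_cast at h ⊢
  exact h

lemma spec_min (K : H →L[ℂ] H) (δ : ℝ) {n : ℕ} (u : Fin n → H) (l : Fin n → ℝ)
    (hu : Orthonormal ℂ u)
    (hK : ∀ x, ‖K x - ∑ m, (l m : ℂ) • (inner ℂ (u m) x • u m)‖ ≤ δ * ‖x‖)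
    (S : Finset (Fin n)) (k : ℕ) (hS : S.card = k + 1) (β : ℝ) (hβ : 0 ≤ β)
    (hl : ∀ m ∈ S, β ≤ |l m|) : β - δ ≤ singularValue K k := by
  classical
  apply sv_ge
  intro R hR
  set V : Submodule ℂ H := LinearMap.range (R : H →ₗ[ℂ] H) with hV
  have : FiniteDimensional ℂ V := by
    rw [FiniteDimensional, ← Module.rank_lt_aleph0_iff]
    exact hR.trans_lt (Cardinal.natCast_lt_aleph0)
  let φ : (S → ℂ) →ₗ[ℂ] V := (R : H →ₗ[ℂ] H).rangeRestrict ∘ₗ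
    (Fintype.linearCombination ℂ (fun m : S => u m))
  have hker : LinearMap.ker φ ≠ ⊥ := by
    apply LinearMap.ker_ne_bot_of_finrank_lt
    rw [Module.finrank_fintype_fun_eq_card, Fintype.card_coe, hS, Nat.lt_succ_iff]
    exact Module.finrank_le_of_rank_le hR
  obtain ⟨c, hc, hc0⟩ := Submodule.exists_mem_ne_zero_of_ne_bot hker
  have huS : Orthonormal ℂ (fun m : S => u m) := hu.comp _ Subtype.val_injective
  set v : H := ∑ m : S, c m • u m with hv
  have hRv : R v = 0 := by
    have := LinearMap.mem_ker.mp hc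
    have := congrArg (Subtype.val) this
    simpa [φ, Fintype.linearCombination_apply, hv] using this
  have hvn : ‖v‖ ^ 2 = ∑ m : S, ‖c m‖ ^ 2 := orth_norm_sq huS Finset.univ c
  have hv0 : 0 < ‖v‖ := by
    rw [norm_pos_iff]
    intro h0
    apply hc0
    rw [h0] at hvn
    simp only [norm_zero, ne_eq, OfNat.ofNat_ne_zero, not_false_eq_true, zero_pow] at hvn
    have := (Finset.sum_eq_zero_iff_of_nonneg (fun i _ => by positivity)).mp hvn.symm
    funext m
    simpa using this m (Finset.mem_univ _)
  have hinner : ∀ m, inner ℂ (u m) v = if h : m ∈ S then c ⟨m, h⟩ else 0 := by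
    intro m
    rw [hv, inner_sum]
    simp only [inner_smul_right, orthonormal_iff_ite.mp hu]
    split_ifs with h
    · rw [Finset.sum_eq_single ⟨m, h⟩]
      · simp
      · rintro ⟨b, hb⟩ _ hne
        have : m ≠ b := fun h => hne (by simp [h])
        simp [this]
      · simp
    · apply Finset.sum_eq_zero
      rintro ⟨b, hb⟩ _
      have : m ≠ b := fun h' => h (h' ▸ hb)
      simp [this]
  have hK'v : β * ‖v‖ ≤ ‖∑ m, (l m : ℂ) • (inner ℂ (u m) v • u m)‖ := by
    apply le_of_sq_le_sq _ (norm_nonneg _)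
    simp only [smul_smul]
    rw [orth_norm_sq hu, mul_pow, hvn, Finset.mul_sum]
    calc ∑ m : S, β ^ 2 * ‖c m‖ ^ 2 ≤ ∑ m : S, ‖(l m : ℂ) * inner ℂ (u m) v‖ ^ 2 := by
          apply Finset.sum_le_sum
          rintro ⟨m, hm⟩ _
          rw [hinner, dif_pos hm, norm_mul, mul_pow]
          have := hl m hm
          have h2 : ‖((l m : ℝ) : ℂ)‖ = |l m| := by simp
          rw [h2]
          gcongr
      _ = ∑ m ∈ S, ‖(l m : ℂ) * inner ℂ (u m) v‖ ^ 2 :=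
          Finset.sum_coe_sort S (fun m => ‖(l m : ℂ) * inner ℂ (u m) v‖ ^ 2)
      _ ≤ _ := Finset.sum_le_sum_of_subset_of_nonneg (Finset.subset_univ _)
          (fun i _ _ => by positivity)
  have h1 := hK v
  have h2 : ‖K v‖ ≤ ‖K - R‖ * ‖v‖ := by
    have := (K - R).le_opNorm v
    simpa [hRv] using this
  have h3 := norm_sub_norm_le (∑ m, (l m : ℂ) • (inner ℂ (u m) v • u m)) (K v)
  rw [norm_sub_rev] at h3
  have : (β - δ) * ‖v‖ ≤ ‖K - R‖ * ‖v‖ := by linarith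
  exact le_of_mul_le_mul_right this hv0

lemma spec_sum (K : H →L[ℂ] H) (δ : ℝ) {n : ℕ} (u : Fin n → H) (l : Fin n → ℝ)
    (hu : Orthonormal ℂ u)
    (hK : ∀ x, ‖K x - ∑ m, (l m : ℂ) • (inner ℂ (u m) x • u m)‖ ≤ δ * ‖x‖)
    (p : ℝ) (hp : 1 ≤ p) (k : ℕ) :
    ∀ (S : Finset (Fin n)), S.card = k → (∀ m ∈ S, 2 * δ < |l m|) →
    ∑ m ∈ S, |l m| ^ p ≤ ∑ j ∈ Finset.range k, (2 * singularValue K j) ^ p := by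
  classical
  induction k with
  | zero => intro S hS _; rw [Finset.card_eq_zero] at hS; simp [hS]
  | succ k ih =>
    intro S hS hl
    have hne : S.Nonempty := by rw [← Finset.card_pos]; omega
    obtain ⟨m0, hm0, hmin⟩ := S.exists_min_image (fun m => |l m|) hne
    rw [← Finset.sum_erase_add S _ hm0, Finset.sum_range_succ]
    have h1 := ih (S.erase m0) (by rw [Finset.card_erase_of_mem hm0]; omega)
      (fun m hm => hl m (Finset.mem_of_mem_erase hm))
    have h2 := spec_min K δ u l hu hK S k hS (|l m0|) (abs_nonneg _) hmin
    have h3 := hl m0 hm0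
    have h4 : |l m0| ≤ 2 * singularValue K k := by linarith
    have h5 : |l m0| ^ p ≤ (2 * singularValue K k) ^ p :=
      Real.rpow_le_rpow (abs_nonneg _) h4 (by linarith)
    linarith

end Spec

section Scalar
open Complex

lemma scalar_den (t x b : ℝ) (hb : b ≠ 0) : (t : ℂ) + b * I - x ≠ 0 := by
  intro h
  have := congrArg Complex.im h
  simp at this
  exact hb this

lemma scalar_atan (a : ℝ) (ha : 0 < a) (x N : ℝ) :
    ∫ t in (-N)..N, (((t : ℂ) + (-a : ℝ) * I - x)⁻¹ - ((t : ℂ) + (a : ℝ) * I - x)⁻¹) =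
      ((2 * (Real.arctan ((N - x) / a) + Real.arctan ((N + x) / a)) : ℝ) : ℂ) * I := by
  have h1 : ∀ t : ℝ, (((t : ℂ) + (-a : ℝ) * I - x)⁻¹ - ((t : ℂ) + (a : ℝ) * I - x)⁻¹) =
      ((2 * (a / (a ^ 2 + (t - x) ^ 2)) : ℝ) : ℂ) * I := by
    intro t
    have e1 := scalar_den t x (-a) (by linarith)
    have e2 := scalar_den t x a (by linarith)
    have e3 : (a : ℂ) ^ 2 + (t - x) ^ 2 ≠ 0 := by
      have : a ^ 2 + (t - x) ^ 2 ≠ 0 := by positivity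
      exact_mod_cast this
    push_cast at *
    have e4 : ((t : ℂ) + -a * I - x) * ((t : ℂ) + a * I - x) = (a : ℂ) ^ 2 + (t - x) ^ 2 := by
      ring_nf; rw [I_sq]; ring
    rw [inv_sub_inv e1 e2, e4]
    field_simp
    ring
  simp only [h1]
  rw [intervalIntegral.integral_mul_const, intervalIntegral.integral_ofReal]
  congr 2
  have h2 : ∀ t : ℝ, HasDerivAt (fun t => 2 * Real.arctan ((t - x) / a))
      (2 * (a / (a ^ 2 + (t - x) ^ 2))) t := by
    intro t
    have h3 : HasDerivAt (fun t : ℝ => (t - x) / a) (1 / a) t :=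
      ((hasDerivAt_id t).sub_const x).div_const a
    have := (h3.arctan).const_mul 2
    refine this.congr_deriv ?_
    have : a ^ 2 + (t - x) ^ 2 ≠ 0 := by positivity
    have : 1 + ((t - x) / a) ^ 2 ≠ 0 := by positivity
    field_simp
  rw [intervalIntegral.integral_eq_sub_of_hasDerivAt (fun t _ => h2 t)]
  · rw [show (-N - x) / a = - ((N + x) / a) by ring, Real.arctan_neg]; ring
  · apply Continuous.intervalIntegrable
    refine continuous_const.mul (continuous_const.div (by fun_prop) ?_)
    intro t; positivity

lemma arctan_ge (y : ℝ) (hy : 0 < y) : Real.pi / 2 - y⁻¹ ≤ Real.arctan y := by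
  have h := Real.arctan_inv_of_pos hy
  have h2 : Real.arctan y⁻¹ ≤ y⁻¹ := by
    have := Real.le_tan (Real.arctan_nonneg.mpr (by positivity : 0 ≤ y⁻¹))
      (Real.arctan_lt_pi_div_two _)
    rwa [Real.tan_arctan] at this
  linarith

lemma scalar_cauchy (F : ℂ → ℂ) (hF : Differentiable ℂ F) (a C : ℝ) (ha : 0 < a) 
    (hC : ∀ z : ℂ, |z.im| ≤ a → ‖F z‖ ≤ C) (r N x : ℝ) (hx : |x| ≤ r) (hN : r < N) :
    ‖(∫ t in (-N)..N, (F ((t : ℂ) + (-a : ℝ) * I) * ((t : ℂ) + (-a : ℝ) * I - x)⁻¹ -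
        F ((t : ℂ) + (a : ℝ) * I) * ((t : ℂ) + (a : ℝ) * I - x)⁻¹))
      - 2 * Real.pi * I * F x‖ ≤ 12 * a * C / (N - r) := by
  set g := dslope F x with hg
  have hgd : Differentiable ℂ g := by
    rw [← differentiableOn_univ] at hF ⊢
    exact (Complex.differentiableOn_dslope Filter.univ_mem).mpr hF
  have hgv : ∀ ζ : ℂ, ζ - x ≠ 0 → g ζ = (F ζ - F x) * (ζ - x)⁻¹ := by
    intro ζ hζ
    rw [hg, dslope_of_ne _ (sub_ne_zero.mp hζ), slope_def_field]; rfl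
  have hrect := Complex.integral_boundary_rect_eq_zero_of_differentiableOn g
    ⟨-N, -a⟩ ⟨N, a⟩ hgd.differentiableOn
  simp only at hrect
  have hxl := abs_le.mp hx
  have hFx : ‖F x‖ ≤ C := hC x (by simpa using ha.le)
  have hC0 : 0 ≤ C := (norm_nonneg _).trans hFx
  have hcg : Continuous g := hgd.continuous
  have hNr : 0 < N - r := by linarith
  have hvert : ∀ R : ℝ, N - r ≤ |R - x| →
      ‖∫ y in (-a)..a, g ((R : ℂ) + y * I)‖ ≤ (2 * C / (N - r)) * (2 * a) := by
    intro R hR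
    have := intervalIntegral.norm_integral_le_of_norm_le_const (a := -a) (b := a)
      (f := fun y : ℝ => g ((R : ℂ) + y * I)) (C := 2 * C / (N - r)) ?_
    · rwa [show |a - -a| = 2 * a by rw [abs_of_pos] <;> linarith] at this
    · intro y hy
      rw [Set.uIoc_of_le (by linarith)] at hy
      have hre : |R - x| ≤ ‖(R : ℂ) + y * I - x‖ := by
        have := Complex.abs_re_le_norm ((R : ℂ) + y * I - x)
        simpa using this
      have hpos : 0 < ‖(R : ℂ) + y * I - x‖ := by linarith
      rw [hgv _ (norm_pos_iff.mp hpos), norm_mul, norm_inv, ← div_eq_mul_inv]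
      apply div_le_div₀ (by linarith) _ hNr (hR.trans hre)
      have := hC ((R : ℂ) + y * I) (by simpa using abs_le.mpr ⟨hy.1.le, hy.2⟩)
      linarith [norm_sub_le (F ((R : ℂ) + y * I)) (F x)]
  have hv1 := hvert N (by rw [abs_of_pos] <;> linarith)
  have hv2 := hvert (-N) (by rw [abs_of_neg] <;> linarith)
  have hden : ∀ b : ℝ, b ≠ 0 → Continuous fun t : ℝ => ((t : ℂ) + b * I - x)⁻¹ := by
    intro b hb
    exact Continuous.inv₀ (by fun_prop) (fun t => scalar_den t x b hb)
  have hsplit : (∫ t in (-N)..N, (F ((t : ℂ) + (-a : ℝ) * I) * ((t : ℂ) + (-a : ℝ) * I - x)⁻¹ -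
        F ((t : ℂ) + (a : ℝ) * I) * ((t : ℂ) + (a : ℝ) * I - x)⁻¹)) =
      ((∫ t in (-N)..N, g ((t : ℂ) + (-a : ℝ) * I)) - ∫ t in (-N)..N, g ((t : ℂ) + (a : ℝ) * I))
      + F x * ∫ t in (-N)..N, (((t : ℂ) + (-a : ℝ) * I - x)⁻¹ - ((t : ℂ) + (a : ℝ) * I - x)⁻¹) := by
    have c1 := hden (-a) (by linarith)
    have c2 := hden a (by linarith)
    rw [← intervalIntegral.integral_const_mul, ← intervalIntegral.integral_sub,
      ← intervalIntegral.integral_add]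
    · apply intervalIntegral.integral_congr
      intro t _
      simp only
      rw [hgv _ (scalar_den t x (-a) (by linarith)), hgv _ (scalar_den t x a (by linarith))]
      ring
    · apply Continuous.intervalIntegrable; fun_prop
    · apply Continuous.intervalIntegrable; fun_prop
    · apply Continuous.intervalIntegrable; fun_prop
    · apply Continuous.intervalIntegrable; fun_prop
  rw [hsplit, scalar_atan a ha]
  set I1 := ∫ y in (-a)..a, g ((N : ℂ) + y * I)
  set I2 := ∫ y in (-a)..a, g (((-N : ℝ) : ℂ) + y * I)
  have h3 : ((∫ t in (-N)..N, g ((t : ℂ) + (-a : ℝ) * I)) -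
      ∫ t in (-N)..N, g ((t : ℂ) + (a : ℝ) * I)) = I * I2 - I * I1 := by
    simp only [smul_eq_mul] at hrect
    linear_combination hrect
  rw [h3]
  set θ := Real.arctan ((N - x) / a) + Real.arctan ((N + x) / a) with hθ
  have hθ1 : |θ - Real.pi| ≤ 2 * a / (N - r) := by
    have p1 : 0 < N - x := by linarith
    have p2 : 0 < N + x := by linarith
    have b1 := arctan_ge ((N - x) / a) (by positivity)
    have b2 := arctan_ge ((N + x) / a) (by positivity)
    have b3 := Real.arctan_lt_pi_div_two ((N - x) / a)
    have b4 := Real.arctan_lt_pi_div_two ((N + x) / a)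
    rw [inv_div] at b1 b2
    have q1 : a / (N - x) ≤ a / (N - r) := by gcongr; linarith
    have q2 : a / (N + x) ≤ a / (N - r) := by gcongr; linarith
    rw [show 2 * a / (N - r) = a / (N - r) + a / (N - r) by ring, abs_le]
    constructor <;> linarith
  have h4 : I * I2 - I * I1 + F x * (((2 * θ : ℝ) : ℂ) * I) - 2 * Real.pi * I * F x =
      I * I2 - I * I1 + F x * (((2 * (θ - Real.pi) : ℝ) : ℂ) * I) := by
    push_cast; ring
  rw [h4]
  refine (norm_add_le _ _).trans ((add_le_add_left (norm_sub_le _ _) _).trans ?_)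
  simp only [norm_mul, norm_I, one_mul, mul_one, Complex.norm_real, Real.norm_eq_abs]
  rw [abs_of_pos (by norm_num : (0:ℝ) < 2)]
  have h5 : ‖F x‖ * (2 * |θ - Real.pi|) ≤ C * (2 * (2 * a / (N - r))) := by gcongr
  calc _ ≤ 2 * C / (N - r) * (2 * a) + 2 * C / (N - r) * (2 * a) + C * (2 * (2 * a / (N - r))) := by
        linarith
    _ = _ := by ring

end Scalar

section Res
open Complex
variable {H : Type*} [NormedAddCommGroup H] [InnerProductSpace ℂ H] [CompleteSpace H]

noncomputable def Res (A : H →L[ℂ] H) (b t : ℝ) : H →L[ℂ] H :=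
  cfc (fun z : ℂ => ((t : ℂ) + b * I - z)⁻¹) A

lemma spec_re {A : H →L[ℂ] H} (hA : IsSelfAdjoint A) {z : ℂ} (hz : z ∈ spectrum ℂ A) :
    z = (z.re : ℂ) := hA.mem_spectrum_eq_re hz

lemma spec_den {A : H →L[ℂ] H} (hA : IsSelfAdjoint A) (b t : ℝ) {z : ℂ}
    (hz : z ∈ spectrum ℂ A) : |b| ≤ ‖(t : ℂ) + b * I - z‖ := by
  rw [spec_re hA hz]
  have := Complex.abs_im_le_norm ((t : ℂ) + b * I - (z.re : ℂ))
  simpa using this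

lemma spec_den_ne {A : H →L[ℂ] H} (hA : IsSelfAdjoint A) {b : ℝ} (hb : b ≠ 0) (t : ℝ) {z : ℂ}
    (hz : z ∈ spectrum ℂ A) : (t : ℂ) + b * I - z ≠ 0 := by
  rw [spec_re hA hz]
  exact scalar_den _ _ _ hb

lemma res_contOn {A : H →L[ℂ] H} (hA : IsSelfAdjoint A) {b : ℝ} (hb : b ≠ 0) (t : ℝ) :
    ContinuousOn (fun z : ℂ => ((t : ℂ) + b * I - z)⁻¹) (spectrum ℂ A) :=
  ContinuousOn.inv₀ (by fun_prop) (fun _ hz => spec_den_ne hA hb t hz)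

lemma res_cont {A : H →L[ℂ] H} (hA : IsSelfAdjoint A) {b : ℝ} (hb : b ≠ 0) :
    Continuous (Res A b) := by
  have hb' : 0 < |b| := abs_pos.mpr hb
  have : LipschitzWith (Real.toNNReal (1 / |b| ^ 2)) (Res A b) := by
    apply LipschitzWith.of_dist_le_mul
    intro t s
    rw [dist_eq_norm, Res, Res, ← cfc_sub _ _ A (res_contOn hA hb t) (res_contOn hA hb s),
      Real.coe_toNNReal _ (by positivity)]
    apply norm_cfc_le (by positivity)
    intro z hz
    have h1 := spec_den_ne hA hb t hz
    have h2 := spec_den_ne hA hb s hz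
    rw [inv_sub_inv h1 h2, norm_div, norm_mul]
    have e1 := spec_den hA b t hz
    have e2 := spec_den hA b s hz
    have e3 : ‖(s : ℂ) + b * I - z - ((t : ℂ) + b * I - z)‖ = dist t s := by
      rw [show (s : ℂ) + b * I - z - ((t : ℂ) + b * I - z) = ((s - t : ℝ) : ℂ) by push_cast; ring,
        Complex.norm_real, dist_comm, Real.dist_eq, Real.norm_eq_abs]
    rw [e3, div_eq_mul_inv, mul_comm, one_div]
    gcongr
    nlinarith
  exact this.continuous

lemma res_mul {A : H →L[ℂ] H} (hA : IsSelfAdjoint A) {b : ℝ} (hb : b ≠ 0) (t : ℝ) :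
    Res A b t * (((t : ℂ) + b * I) • 1 - A) = 1 ∧ (((t : ℂ) + b * I) • 1 - A) * Res A b t = 1 := by
  have hn : IsStarNormal A := hA.isStarNormal
  have h1 : ((t : ℂ) + b * I) • (1 : H →L[ℂ] H) - A = cfc (fun z : ℂ => (t : ℂ) + b * I - z) A := by
    rw [cfc_sub _ _ A (by fun_prop) (by fun_prop), cfc_const _ A, cfc_id' ℂ A,
      Algebra.algebraMap_eq_smul_one]
  have h2 : cfc (fun _ : ℂ => (1 : ℂ)) A = 1 := cfc_const_one ℂ A
  constructor
  · rw [h1, Res, ← cfc_mul _ _ A (res_contOn hA hb t) (by fun_prop), ← h2]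
    apply cfc_congr
    intro z hz
    exact inv_mul_cancel₀ (spec_den_ne hA hb t hz)
  · rw [h1, Res, ← cfc_mul _ _ A (by fun_prop) (res_contOn hA hb t), ← h2]
    apply cfc_congr
    intro z hz
    exact mul_inv_cancel₀ (spec_den_ne hA hb t hz)

lemma res_sub {A B : H →L[ℂ] H} (hA : IsSelfAdjoint A) (hB : IsSelfAdjoint B) {b : ℝ}
    (hb : b ≠ 0) (t : ℝ) : Res A b t - Res B b t = Res A b t * (A - B) * Res B b t := by
  have h1 := (res_mul hA hb t).1
  have h2 := (res_mul hB hb t).2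
  set ζ := ((t : ℂ) + b * I) • (1 : H →L[ℂ] H)
  calc Res A b t - Res B b t = Res A b t * ((ζ - B) * Res B b t) - (Res A b t * (ζ - A)) * Res B b t := by
        rw [h1, h2, mul_one, one_mul]
    _ = _ := by noncomm_ring

lemma res_star {A : H →L[ℂ] H} (hA : IsSelfAdjoint A) (b : ℝ) (t : ℝ) :
    star (Res A b t) = Res A (-b) t := by
  rw [Res, Res, ← cfc_star]
  apply cfc_congr
  intro z hz
  simp only
  rw [spec_re hA hz]
  simp

lemma res_inner {A : H →L[ℂ] H} (hA : IsSelfAdjoint A) (b t : ℝ) (x y : H) :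
    inner ℂ x (Res A b t y) = inner ℂ (Res A (-b) t x) y := by
  rw [← res_star hA, ContinuousLinearMap.star_eq_adjoint, ContinuousLinearMap.adjoint_inner_left]

lemma cfc_intervalIntegral {A : H →L[ℂ] H} (hA : IsSelfAdjoint A) (G : ℝ → ℂ → ℂ) (N D : ℝ)
    (hN : 0 ≤ N) (hG : ContinuousOn (Function.uncurry G) (Set.univ ×ˢ spectrum ℂ A))
    (hD : ∀ t, ∀ z ∈ spectrum ℂ A, ‖G t z‖ ≤ D) :
    cfc (fun z => ∫ t in (-N)..N, G t z) A = ∫ t in (-N)..N, cfc (G t) A := by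
  have hn : IsStarNormal A := hA.isStarNormal
  simp only [intervalIntegral.integral_of_le (show -N ≤ N by linarith)]
  apply cfc_setIntegral measurableSet_Ioc G (fun _ => D) A
  · exact hG.mono (Set.prod_mono (Set.subset_univ _) le_rfl)
  · exact Filter.Eventually.of_forall hD
  · exact (MeasureTheory.integrable_const D).hasFiniteIntegral

lemma atan_bound (a : ℝ) (ha : 0 < a) (x N : ℝ) :
    ∫ t in (-N)..N, (a ^ 2 + (t - x) ^ 2)⁻¹ ≤ Real.pi / a := by
  have h2 : ∀ t : ℝ, HasDerivAt (fun t => a⁻¹ * Real.arctan ((t - x) / a))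
      ((a ^ 2 + (t - x) ^ 2)⁻¹) t := by
    intro t
    have h3 : HasDerivAt (fun t : ℝ => (t - x) / a) (1 / a) t :=
      ((hasDerivAt_id t).sub_const x).div_const a
    have := (h3.arctan).const_mul a⁻¹
    refine this.congr_deriv ?_
    have : a ^ 2 + (t - x) ^ 2 ≠ 0 := by positivity
    have : 1 + ((t - x) / a) ^ 2 ≠ 0 := by positivity
    field_simp
  rw [intervalIntegral.integral_eq_sub_of_hasDerivAt (fun t _ => h2 t)]
  · have b3 := Real.arctan_lt_pi_div_two ((N - x) / a)
    have b4 := Real.neg_pi_div_two_lt_arctan ((-N - x) / a)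
    rw [← mul_sub, div_eq_mul_inv Real.pi, mul_comm Real.pi]
    exact mul_le_mul_of_nonneg_left (by linarith) (by positivity)
  · apply Continuous.intervalIntegrable
    refine Continuous.inv₀ (by fun_prop) ?_
    intro t; positivity

lemma res_sq {A : H →L[ℂ] H} (hA : IsSelfAdjoint A) {b : ℝ} (hb : b ≠ 0) (N : ℝ) (hN : 0 ≤ N)
    (v : H) : ∫ t in (-N)..N, ‖Res A b t v‖ ^ 2 ≤ Real.pi / |b| * ‖v‖ ^ 2 := by
  have hb' : 0 < |b| := abs_pos.mpr hb
  have hnb : -b ≠ 0 := neg_ne_zero.mpr hb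
  let G : ℝ → ℂ → ℂ := fun t z => ((t : ℂ) + (-b : ℝ) * I - z)⁻¹ * ((t : ℂ) + b * I - z)⁻¹
  have hGval : ∀ t, ∀ z ∈ spectrum ℂ A, G t z = (((|b| ^ 2 + (t - z.re) ^ 2)⁻¹ : ℝ) : ℂ) := by
    intro t z hz
    simp only [G]
    rw [← mul_inv]
    conv_lhs => rw [spec_re hA hz]
    push_cast
    congr 1
    have : ((|b| : ℝ) : ℂ) ^ 2 = (b : ℂ) ^ 2 := by exact_mod_cast (sq_abs b)
    rw [this]
    ring_nf; rw [I_sq]; ring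
  have hGcfc : ∀ t, cfc (G t) A = Res A (-b) t * Res A b t := by
    intro t
    rw [Res, Res, ← cfc_mul _ _ A (res_contOn hA hnb t) (res_contOn hA hb t)]
  have hint := cfc_intervalIntegral hA G N ((|b| ^ 2)⁻¹) hN ?_ ?_
  rotate_left
  · have : ∀ c : ℝ, c ≠ 0 → ContinuousOn (fun q : ℝ × ℂ => ((q.1 : ℂ) + c * I - q.2)⁻¹)
        (Set.univ ×ˢ spectrum ℂ A) := by
      intro c hc
      exact ContinuousOn.inv₀ (by fun_prop) (fun q hq => spec_den_ne hA hc q.1 hq.2)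
    exact (this (-b) hnb).mul (this b hb)
  · intro t z hz
    rw [hGval t z hz, Complex.norm_real, Real.norm_eq_abs, abs_of_nonneg (by positivity)]
    gcongr
    nlinarith [sq_nonneg (t - z.re)]
  have hnorm : ‖cfc (fun z => ∫ t in (-N)..N, G t z) A‖ ≤ Real.pi / |b| := by
    apply norm_cfc_le (by positivity)
    intro z hz
    have : ∫ t in (-N)..N, G t z = ((∫ t in (-N)..N, (|b| ^ 2 + (t - z.re) ^ 2)⁻¹ : ℝ) : ℂ) := by
      rw [← intervalIntegral.integral_ofReal]
      exact intervalIntegral.integral_congr (fun t _ => hGval t z hz)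
    rw [this, Complex.norm_real, Real.norm_eq_abs, abs_of_nonneg]
    · exact atan_bound _ hb' _ _
    · apply intervalIntegral.integral_nonneg (by linarith)
      intro t _; positivity
  rw [hint] at hnorm
  simp only [hGcfc] at hnorm
  have hc : Continuous fun t => Res A (-b) t * Res A b t :=
    (res_cont hA hnb).mul (res_cont hA hb)
  have hpt : ∀ t, ((‖Res A b t v‖ ^ 2 : ℝ) : ℂ) = inner ℂ v ((Res A (-b) t * Res A b t) v) := by
    intro t
    rw [mul_apply_eq_comp, res_inner hA, neg_neg, inner_self_eq_norm_sq_to_K]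
    push_cast; rfl
  have hfin : ((∫ t in (-N)..N, ‖Res A b t v‖ ^ 2 : ℝ) : ℂ) =
      inner ℂ v ((∫ t in (-N)..N, Res A (-b) t * Res A b t) v) := by
    rw [← intervalIntegral.integral_ofReal]
    simp only [hpt]
    rw [ContinuousLinearMap.intervalIntegral_apply (hc.intervalIntegrable _ _)]
    exact (innerSL ℂ v).intervalIntegral_comp_comm
      ((hc.clm_apply continuous_const).intervalIntegrable _ _)
  have h0 : 0 ≤ ∫ t in (-N)..N, ‖Res A b t v‖ ^ 2 :=
    intervalIntegral.integral_nonneg (by linarith) (fun t _ => by positivity)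
  calc ∫ t in (-N)..N, ‖Res A b t v‖ ^ 2 = ‖((∫ t in (-N)..N, ‖Res A b t v‖ ^ 2 : ℝ) : ℂ)‖ := by
        rw [Complex.norm_real, Real.norm_eq_abs, abs_of_nonneg h0]
    _ ≤ ‖v‖ * (Real.pi / |b| * ‖v‖) := by
        rw [hfin]
        refine (norm_inner_le_norm _ _).trans ?_
        gcongr
        exact ContinuousLinearMap.le_of_opNorm_le _ hnorm v
    _ = _ := by ring

end Res

section Key
open Complex
variable {H : Type*} [NormedAddCommGroup H] [InnerProductSpace ℂ H] [CompleteSpace H]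

lemma line_bound (F : ℂ → ℂ) (a C : ℝ) (hC : ∀ z : ℂ, |z.im| ≤ a → ‖F z‖ ≤ C) (b t : ℝ)
    (hb : |b| ≤ a) : ‖F ((t : ℂ) + b * I)‖ ≤ C := by
  apply hC; simpa using hb

lemma cfc_approx {A : H →L[ℂ] H} (hA : IsSelfAdjoint A) (F : ℂ → ℂ) (hF : Differentiable ℂ F)
    (a C : ℝ) (ha : 0 < a) (hC : ∀ z : ℂ, |z.im| ≤ a → ‖F z‖ ≤ C) (r N : ℝ)
    (hr : ∀ z ∈ spectrum ℂ A, ‖z‖ ≤ r) (hN : r < N) (hN0 : 0 ≤ N) :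
    ‖(2 * Real.pi * I : ℂ) • cfc (fun z : ℂ => F z.re) A -
      ∫ t in (-N)..N, (F ((t : ℂ) + (-a : ℝ) * I) • Res A (-a) t -
        F ((t : ℂ) + (a : ℝ) * I) • Res A a t)‖ ≤ 12 * a * C / (N - r) := by
  have hn : IsStarNormal A := hA.isStarNormal
  have hna : -a ≠ 0 := by linarith
  have hC0 : 0 ≤ C := (norm_nonneg _).trans (hC 0 (by simpa using ha.le))
  let G : ℝ → ℂ → ℂ := fun t z => F ((t : ℂ) + (-a : ℝ) * I) * ((t : ℂ) + (-a : ℝ) * I - z)⁻¹ -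
    F ((t : ℂ) + (a : ℝ) * I) * ((t : ℂ) + (a : ℝ) * I - z)⁻¹
  have hFc := hF.continuous
  have hGcfc : ∀ t, cfc (G t) A = F ((t : ℂ) + (-a : ℝ) * I) • Res A (-a) t -
        F ((t : ℂ) + (a : ℝ) * I) • Res A a t := by
    intro t
    have c1 := res_contOn hA hna t
    have c2 := res_contOn hA ha.ne' t
    have d1 : ContinuousOn (fun z : ℂ => F ((t : ℂ) + (-a : ℝ) * I) *
      ((t : ℂ) + (-a : ℝ) * I - z)⁻¹) (spectrum ℂ A) := continuousOn_const.mul c1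
    have d2 : ContinuousOn (fun z : ℂ => F ((t : ℂ) + (a : ℝ) * I) *
      ((t : ℂ) + (a : ℝ) * I - z)⁻¹) (spectrum ℂ A) := continuousOn_const.mul c2
    rw [Res, Res, ← cfc_const_mul _ _ A c1, ← cfc_const_mul _ _ A c2, ← cfc_sub _ _ A d1 d2]
  have hGc : ContinuousOn (Function.uncurry G) (Set.univ ×ˢ spectrum ℂ A) := by
    have : ∀ c : ℝ, c ≠ 0 → ContinuousOn
        (fun q : ℝ × ℂ => F ((q.1 : ℂ) + c * I) * ((q.1 : ℂ) + c * I - q.2)⁻¹)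
        (Set.univ ×ˢ spectrum ℂ A) := by
      intro c hc
      refine ContinuousOn.mul (by fun_prop) 
        (ContinuousOn.inv₀ (by fun_prop) (fun q hq => spec_den_ne hA hc q.1 hq.2))
    exact (this (-a) hna).sub (this a ha.ne')
  have hint := cfc_intervalIntegral hA G N (C * a⁻¹ + C * a⁻¹) hN0 hGc ?_
  rotate_left
  · intro t z hz
    have : ∀ c : ℝ, |c| = a → ‖F ((t : ℂ) + c * I) * ((t : ℂ) + c * I - z)⁻¹‖ ≤ C * a⁻¹ := by
      intro c hc
      rw [norm_mul, norm_inv]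
      have h1 := line_bound F a C hC c t hc.le
      have h2 := spec_den hA c t hz
      rw [hc] at h2
      gcongr
    refine (norm_sub_le _ _).trans (add_le_add (this _ ?_) (this _ ?_))
    · rw [abs_neg, abs_of_pos ha]
    · rw [abs_of_pos ha]
  simp only [hGcfc] at hint
  rw [← hint]
  have hcont1 : ContinuousOn (fun z : ℂ => F z.re) (spectrum ℂ A) := by fun_prop
  have hcont2 : ContinuousOn (fun z : ℂ => ∫ t in (-N)..N, G t z) (spectrum ℂ A) := by
    rw [continuousOn_iff_continuous_domRestrict]
    apply intervalIntegral.continuous_parametric_intervalIntegral_of_continuous'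
    have : Continuous fun q : (spectrum ℂ A) × ℝ => (⟨(q.2, (q.1 : ℂ)), Set.mem_univ _, q.1.2⟩ :
        (Set.univ ×ˢ spectrum ℂ A : Set (ℝ × ℂ))) := by fun_prop
    exact (continuousOn_iff_continuous_domRestrict.mp hGc).comp this
  have d1 : ContinuousOn (fun z : ℂ => (2 * Real.pi * I : ℂ) * F z.re) (spectrum ℂ A) :=
    continuousOn_const.mul hcont1
  rw [← cfc_const_mul _ _ A hcont1, ← cfc_sub _ _ A d1 hcont2]
  have hNr : 0 < N - r := by linarith
  apply norm_cfc_le (by positivity)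
  intro z hz
  have hzr : |z.re| ≤ r := (Complex.abs_re_le_norm z).trans (hr z hz)
  have := scalar_cauchy F hF a C ha hC r N z.re hzr hN
  rw [norm_sub_rev, ← spec_re hA hz] at this
  simp only [G]
  rw [← spec_re hA hz]
  exact this

/-- integrated squared matrix coefficient -/
noncomputable def bet (N : ℝ) (A : H →L[ℂ] H) (b : ℝ) (u v : H) : ℝ :=
  ∫ t in (-N)..N, ‖inner ℂ u (Res A b t v)‖ ^ 2

lemma bet_int {A : H →L[ℂ] H} (hA : IsSelfAdjoint A) {b : ℝ} (hb : b ≠ 0) (N : ℝ) (u v : H) :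
    IntervalIntegrable (fun t => ‖inner ℂ u (Res A b t v)‖ ^ 2) MeasureTheory.volume (-N) N := by
  have := res_cont hA hb
  apply Continuous.intervalIntegrable
  fun_prop

lemma bet_nonneg (A : H →L[ℂ] H) (b N : ℝ) (hN : 0 ≤ N) (u v : H) : 0 ≤ bet N A b u v :=
  intervalIntegral.integral_nonneg (by linarith) (fun t _ => by positivity)

lemma bet_symm {A : H →L[ℂ] H} (hA : IsSelfAdjoint A) (b N : ℝ) (u v : H) :
    bet N A b u v = bet N A (-b) v u := by
  unfold bet
  congr 1
  funext t
  rw [res_inner hA, norm_inner_symm]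

lemma bet_sum {ι : Type*} [Fintype ι] {A : H →L[ℂ] H} (hA : IsSelfAdjoint A) {b : ℝ} (hb : b ≠ 0)
    (N : ℝ) (hN : 0 ≤ N) (u : ι → H) (hu : Orthonormal ℂ u) (v : H) (hv : ‖v‖ = 1) :
    ∑ m, bet N A b (u m) v ≤ Real.pi / |b| := by
  unfold bet
  rw [← intervalIntegral.integral_finsetSum (fun m _ => bet_int hA hb N (u m) v)]
  have h := res_sq hA hb N hN v
  rw [hv, one_pow, mul_one] at h
  refine le_trans ?_ h
  have := res_cont hA hb
  apply intervalIntegral.integral_mono_on (by linarith)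
  · apply Continuous.intervalIntegrable; fun_prop
  · apply Continuous.intervalIntegrable; fun_prop
  · intro t _
    exact hu.sum_inner_products_le _

lemma bet_sum' {ι : Type*} [Fintype ι] {A : H →L[ℂ] H} (hA : IsSelfAdjoint A) {b : ℝ} (hb : b ≠ 0)
    (N : ℝ) (hN : 0 ≤ N) (u : ι → H) (hu : Orthonormal ℂ u) (v : H) (hv : ‖v‖ = 1) :
    ∑ m, bet N A b v (u m) ≤ Real.pi / |b| := by
  have := bet_sum hA (neg_ne_zero.mpr hb) N hN u hu v hv
  rw [abs_neg] at this
  simpa only [bet_symm hA b] using this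

lemma form_pt (K : H →L[ℂ] H) (δ : ℝ) (hδ : 0 ≤ δ) {n : ℕ} (u : Fin n → H) (l : Fin n → ℝ)
    (hK : ∀ x, ‖K x - ∑ m, (l m : ℂ) • (inner ℂ (u m) x • u m)‖ ≤ δ * ‖x‖) (x y : H) :
    ‖inner ℂ y (K x)‖ ≤ ∑ m, |l m| * ((‖inner ℂ (u m) x‖ ^ 2 + ‖inner ℂ (u m) y‖ ^ 2) / 2) +
      δ * ((‖x‖ ^ 2 + ‖y‖ ^ 2) / 2) := by
  set S := ∑ m, (l m : ℂ) • (inner ℂ (u m) x • u m) with hS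
  have h1 : inner ℂ y (K x) = inner ℂ y S + inner ℂ y (K x - S) := by
    rw [← inner_add_right]; congr 1; abel
  rw [h1]
  refine (norm_add_le _ _).trans (add_le_add ?_ ?_)
  · rw [hS, inner_sum]
    refine (norm_sum_le _ _).trans (Finset.sum_le_sum fun m _ => ?_)
    rw [inner_smul_right, inner_smul_right, norm_mul, norm_mul, Complex.norm_real,
      Real.norm_eq_abs, norm_inner_symm y]
    gcongr
    nlinarith [sq_nonneg (‖inner ℂ (u m) x‖ - ‖inner ℂ (u m) y‖)]
  · refine (norm_inner_le_norm _ _).trans ?_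
    calc ‖y‖ * ‖K x - S‖ ≤ ‖y‖ * (δ * ‖x‖) := by gcongr; exact hK x
      _ = δ * (‖x‖ * ‖y‖) := by ring
      _ ≤ _ := by
        gcongr
        nlinarith [sq_nonneg (‖x‖ - ‖y‖)]

lemma form_int {A B : H →L[ℂ] H} (hA : IsSelfAdjoint A) (hB : IsSelfAdjoint B) (δ : ℝ)
    (hδ : 0 ≤ δ) {n : ℕ} (u : Fin n → H) (l : Fin n → ℝ)
    (hK : ∀ x, ‖(A - B) x - ∑ m, (l m : ℂ) • (inner ℂ (u m) x • u m)‖ ≤ δ * ‖x‖) {b : ℝ}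
    (hb : b ≠ 0) (N : ℝ) (hN : 0 ≤ N) (e g : H) (he : ‖e‖ = 1) (hg : ‖g‖ = 1) :
    ∫ t in (-N)..N, ‖inner ℂ g ((Res A b t - Res B b t) e)‖ ≤
      ∑ m, |l m| * ((bet N B b (u m) e + bet N A (-b) (u m) g) / 2) + δ * (Real.pi / |b|) := by
  have hnb : -b ≠ 0 := neg_ne_zero.mpr hb
  have cA := res_cont hA hb
  have cA' := res_cont hA hnb
  have cB := res_cont hB hb
  have hsqe := res_sq hB hb N hN e
  have hsqg := res_sq hA hnb N hN g
  rw [he, one_pow, mul_one] at hsqe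
  rw [hg, one_pow, mul_one, abs_neg] at hsqg
  have hmono : ∫ t in (-N)..N, ‖inner ℂ g ((Res A b t - Res B b t) e)‖ ≤
      ∫ t in (-N)..N, (∑ m, |l m| * ((‖inner ℂ (u m) (Res B b t e)‖ ^ 2 +
        ‖inner ℂ (u m) (Res A (-b) t g)‖ ^ 2) / 2) +
      δ * ((‖Res B b t e‖ ^ 2 + ‖Res A (-b) t g‖ ^ 2) / 2)) := by
    apply intervalIntegral.integral_mono_on (by linarith)
    · apply Continuous.intervalIntegrable; fun_prop
    · apply Continuous.intervalIntegrable; fun_prop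
    · intro t _
      rw [res_sub hA hB hb, mul_apply_eq_comp, mul_apply_eq_comp, res_inner hA]
      exact form_pt (A - B) δ hδ u l hK _ _
  refine hmono.trans ?_
  rw [intervalIntegral.integral_add, intervalIntegral.integral_finsetSum,
    intervalIntegral.integral_const_mul, intervalIntegral.integral_div,
    intervalIntegral.integral_add]
  · refine add_le_add (Finset.sum_le_sum fun m _ => ?_) ?_
    · rw [intervalIntegral.integral_const_mul, intervalIntegral.integral_div,
        intervalIntegral.integral_add (bet_int hB hb N _ _) (bet_int hA hnb N _ _)]
      rfl
    · refine mul_le_mul_of_nonneg_left ?_ hδ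
      linarith
  · apply Continuous.intervalIntegrable; fun_prop
  · apply Continuous.intervalIntegrable; fun_prop
  · intro m _; apply Continuous.intervalIntegrable; fun_prop
  · apply Continuous.intervalIntegrable; fun_prop
  · apply Continuous.intervalIntegrable; fun_prop

end Key

section Fin1
open Complex
variable {H : Type*} [NormedAddCommGroup H] [InnerProductSpace ℂ H] [CompleteSpace H]

lemma spec_final (K : H →L[ℂ] H) (hK : IsSelfAdjoint K) (δ : ℝ) (hδ : 0 < δ) (j : ℕ)
    (hj : singularValue K j < δ / 8) (p : ℝ) (hp : 1 ≤ p) (Sg : ℝ)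
    (hS : ∀ k, ∑ j ∈ Finset.range k, singularValue K j ^ p ≤ Sg) :
    ∃ (n : ℕ) (u : Fin n → H) (l : Fin n → ℝ), Orthonormal ℂ u ∧
      (∀ x, ‖K x - ∑ m, (l m : ℂ) • (inner ℂ (u m) x • u m)‖ ≤ δ * ‖x‖) ∧
      ∑ m, |l m| ^ p ≤ 2 ^ p * Sg := by
  classical
  obtain ⟨n, u, l, hu, happ⟩ := spec_approx K hK (δ / 8) j hj
  set S := Finset.univ.filter (fun m => 2 * (2 * (δ / 8)) < |l m|) with hSdef
  refine ⟨n, u, fun m => if 2 * (2 * (δ / 8)) < |l m| then l m else 0, hu, ?_, ?_⟩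
  · intro x
    set l' : Fin n → ℝ := fun m => if 2 * (2 * (δ / 8)) < |l m| then l m else 0 with hl'
    have hd : ‖∑ m, ((l m - l' m : ℝ) : ℂ) • (inner ℂ (u m) x • u m)‖ ≤ δ / 2 * ‖x‖ := by
      apply le_of_sq_le_sq _ (by positivity)
      simp only [smul_smul]
      rw [orth_norm_sq hu, mul_pow]
      calc ∑ m, ‖((l m - l' m : ℝ) : ℂ) * inner ℂ (u m) x‖ ^ 2
          ≤ ∑ m, (δ / 2) ^ 2 * ‖inner ℂ (u m) x‖ ^ 2 := by
            apply Finset.sum_le_sum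
            intro m _
            rw [norm_mul, mul_pow, Complex.norm_real, Real.norm_eq_abs]
            have : |l m - l' m| ≤ δ / 2 := by
              simp only [hl']
              split_ifs with h
              · simp; positivity
              · simp only [sub_zero]; linarith
            gcongr
        _ ≤ _ := by
            rw [← Finset.mul_sum]
            gcongr
            exact hu.sum_inner_products_le x
    have e1 : K x - ∑ m, (l' m : ℂ) • (inner ℂ (u m) x • u m) =
        (K x - ∑ m, (l m : ℂ) • (inner ℂ (u m) x • u m)) +
          ∑ m, ((l m - l' m : ℝ) : ℂ) • (inner ℂ (u m) x • u m) := by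
      have : ∀ m, ((l m - l' m : ℝ) : ℂ) • (inner ℂ (u m) x • u m) =
        (l m : ℂ) • (inner ℂ (u m) x • u m) - (l' m : ℂ) • (inner ℂ (u m) x • u m) := by
        intro m; rw [← sub_smul]; push_cast; rfl
      simp only [this, Finset.sum_sub_distrib]
      abel
    rw [e1]
    have := happ x
    have h2 := norm_add_le (K x - ∑ m, (l m : ℂ) • (inner ℂ (u m) x • u m))
      (∑ m, ((l m - l' m : ℝ) : ℂ) • (inner ℂ (u m) x • u m))
    have := norm_nonneg x
    nlinarith [mul_nonneg hδ.le this]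
  · have h1 := spec_sum K (2 * (δ / 8)) u l hu happ p hp S.card S rfl
      (fun m hm => (Finset.mem_filter.mp hm).2)
    have e1 : ∑ m, |if 2 * (2 * (δ / 8)) < |l m| then l m else 0| ^ p = ∑ m ∈ S, |l m| ^ p := by
      rw [hSdef, Finset.sum_filter]
      apply Finset.sum_congr rfl
      intro m _
      split_ifs with h
      · rfl
      · rw [abs_zero, Real.zero_rpow (by linarith)]
    rw [e1]
    refine h1.trans ?_
    have e2 : ∀ j, (2 * singularValue K j) ^ p = 2 ^ p * singularValue K j ^ p := fun j =>
      Real.mul_rpow (by norm_num) (sv_nonneg K j)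
    simp only [e2]
    rw [← Finset.mul_sum]
    have := hS S.card
    gcongr

noncomputable def wt (C a N : ℝ) (A B : H →L[ℂ] H) (u e g : H) : ℝ :=
  C / (2 * Real.pi) * ((bet N B (-a) u e + bet N A (- -a) u g) / 2 +
    (bet N B a u e + bet N A (-a) u g) / 2)

lemma wt_nonneg (C a N : ℝ) (hC : 0 ≤ C) (hN : 0 ≤ N) (A B : H →L[ℂ] H) (u e g : H) :
    0 ≤ wt C a N A B u e g := by
  have h1 := bet_nonneg B (-a) N hN u e
  have h2 := bet_nonneg A (- -a) N hN u g
  have h3 := bet_nonneg B a N hN u e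
  have h4 := bet_nonneg A (-a) N hN u g
  unfold wt
  positivity

lemma wt_sum_aux (C a P : ℝ) (hC : 0 ≤ C) (ha : 0 < a) {ι : Type*} [Fintype ι]
    (x1 x2 x3 x4 : ι → ℝ) (hP : P = Real.pi / a) (h1 : ∑ i, x1 i ≤ P) (h2 : ∑ i, x2 i ≤ P)
    (h3 : ∑ i, x3 i ≤ P) (h4 : ∑ i, x4 i ≤ P) :
    ∑ i, C / (2 * Real.pi) * ((x1 i + x2 i) / 2 + (x3 i + x4 i) / 2) ≤ C / a := by
  have hpi := Real.pi_pos
  rw [← Finset.mul_sum, Finset.sum_add_distrib, ← Finset.sum_div, ← Finset.sum_div,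
    Finset.sum_add_distrib, Finset.sum_add_distrib]
  calc _ ≤ C / (2 * Real.pi) * (2 * (Real.pi / a)) := by
        gcongr
        linarith
    _ = C / a := by field_simp

lemma wt_sum_m {n : ℕ} {A B : H →L[ℂ] H} (hA : IsSelfAdjoint A) (hB : IsSelfAdjoint B)
    (C a N : ℝ) (hC : 0 ≤ C) (ha : 0 < a) (hN : 0 ≤ N) (u : Fin n → H) (hu : Orthonormal ℂ u)
    (e g : H) (he : ‖e‖ = 1) (hg : ‖g‖ = 1) : ∑ m, wt C a N A B (u m) e g ≤ C / a := by
  have hna : -a ≠ 0 := by linarith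
  have hnna : - -a ≠ 0 := by linarith
  have e1 : |a| = a := abs_of_pos ha
  unfold wt
  apply wt_sum_aux C a _ hC ha _ _ _ _ rfl
  · simpa only [abs_neg, e1] using bet_sum hB hna N hN u hu e he
  · simpa only [abs_neg, e1] using bet_sum hA hnna N hN u hu g hg
  · simpa only [abs_neg, e1] using bet_sum hB ha.ne' N hN u hu e he
  · simpa only [abs_neg, e1] using bet_sum hA hna N hN u hu g hg

lemma wt_sum_i {n : ℕ} {A B : H →L[ℂ] H} (hA : IsSelfAdjoint A) (hB : IsSelfAdjoint B)
    (C a N : ℝ) (hC : 0 ≤ C) (ha : 0 < a) (hN : 0 ≤ N) (u : H) (hu : ‖u‖ = 1)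
    (e g : Fin n → H) (he : Orthonormal ℂ e) (hg : Orthonormal ℂ g) :
    ∑ i, wt C a N A B u (e i) (g i) ≤ C / a := by
  have hna : -a ≠ 0 := by linarith
  have hnna : - -a ≠ 0 := by linarith
  have e1 : |a| = a := abs_of_pos ha
  unfold wt
  apply wt_sum_aux C a _ hC ha _ _ _ _ rfl
  · simpa only [abs_neg, e1] using bet_sum' hB hna N hN e he u hu
  · simpa only [abs_neg, e1] using bet_sum' hA hnna N hN g hg u hu
  · simpa only [abs_neg, e1] using bet_sum' hB ha.ne' N hN e he u hu
  · simpa only [abs_neg, e1] using bet_sum' hA hna N hN g hg u hu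

lemma key {A B : H →L[ℂ] H} (hA : IsSelfAdjoint A) (hB : IsSelfAdjoint B) (F : ℂ → ℂ)
    (hF : Differentiable ℂ F) (a C : ℝ) (ha : 0 < a) (hC : ∀ z : ℂ, |z.im| ≤ a → ‖F z‖ ≤ C)
    (δ : ℝ) (hδ : 0 ≤ δ) {n : ℕ} (u : Fin n → H) (l : Fin n → ℝ)
    (hK : ∀ x, ‖(A - B) x - ∑ m, (l m : ℂ) • (inner ℂ (u m) x • u m)‖ ≤ δ * ‖x‖)
    (η : ℝ) (hη : 0 < η) : ∃ N : ℝ, 0 ≤ N ∧ ∀ e g : H, ‖e‖ = 1 → ‖g‖ = 1 →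
      ‖inner ℂ g ((cfc (fun z : ℂ => F z.re) A - cfc (fun z : ℂ => F z.re) B) e)‖ ≤
        ∑ m, |l m| * wt C a N A B (u m) e g + δ * (C / a) + η := by
  have hpi := Real.pi_pos
  have hC0 : 0 ≤ C := (norm_nonneg _).trans (hC 0 (by simpa using ha.le))
  set r := max (‖A‖ * ‖(1 : H →L[ℂ] H)‖) (‖B‖ * ‖(1 : H →L[ℂ] H)‖) with hr
  have hr0 : 0 ≤ r := le_max_of_le_left (by positivity)
  have hrA : ∀ z ∈ spectrum ℂ A, ‖z‖ ≤ r := fun z hz =>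
    (spectrum.norm_le_norm_mul_of_mem hz).trans (le_max_left _ _)
  have hrB : ∀ z ∈ spectrum ℂ B, ‖z‖ ≤ r := fun z hz =>
    (spectrum.norm_le_norm_mul_of_mem hz).trans (le_max_right _ _)
  set D := 12 * a * C / η + 1 with hD
  have hD0 : 0 < D := by positivity
  have hDη : 12 * a * C / D ≤ η := by
    rw [div_le_iff₀ hD0, hD, mul_add, mul_div_cancel₀ _ hη.ne']
    linarith
  have hN0 : 0 ≤ r + D := by positivity
  refine ⟨r + D, hN0, ?_⟩
  set N := r + D with hN
  intro e g he hg
  have hna : -a ≠ 0 := by linarith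
  have apA := cfc_approx hA F hF a C ha hC r N hrA (by linarith) hN0
  have apB := cfc_approx hB F hF a C ha hC r N hrB (by linarith) hN0
  have hNr : N - r = D := by rw [hN]; ring
  rw [hNr] at apA apB
  set fA := cfc (fun z : ℂ => F z.re) A
  set fB := cfc (fun z : ℂ => F z.re) B
  have cA := res_cont hA ha.ne'
  have cA' := res_cont hA hna
  have cB := res_cont hB ha.ne'
  have cB' := res_cont hB hna
  have cF := hF.continuous
  set IA := ∫ t in (-N)..N, (F ((t : ℂ) + (-a : ℝ) * I) • Res A (-a) t -
        F ((t : ℂ) + (a : ℝ) * I) • Res A a t) with hIA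
  set IB := ∫ t in (-N)..N, (F ((t : ℂ) + (-a : ℝ) * I) • Res B (-a) t -
        F ((t : ℂ) + (a : ℝ) * I) • Res B a t) with hIB
  have hI : ‖inner ℂ g ((IA - IB) e)‖ ≤
      C * (∑ m, |l m| * ((bet N B (-a) (u m) e + bet N A (- -a) (u m) g) / 2) +
        δ * (Real.pi / |(-a)|)) +
      C * (∑ m, |l m| * ((bet N B a (u m) e + bet N A (-a) (u m) g) / 2) +
        δ * (Real.pi / |a|)) := by
    have i1 := form_int hA hB δ hδ u l hK hna N hN0 e g he hg
    have i2 := form_int hA hB δ hδ u l hK ha.ne' N hN0 e g he hg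
    refine le_trans ?_ (add_le_add (mul_le_mul_of_nonneg_left i1 hC0)
      (mul_le_mul_of_nonneg_left i2 hC0))
    rw [← intervalIntegral.integral_const_mul, ← intervalIntegral.integral_const_mul,
      ← intervalIntegral.integral_add]
    rotate_left
    · apply Continuous.intervalIntegrable; fun_prop
    · apply Continuous.intervalIntegrable; fun_prop
    rw [hIA, hIB, ← intervalIntegral.integral_sub]
    rotate_left
    · apply Continuous.intervalIntegrable; fun_prop
    · apply Continuous.intervalIntegrable; fun_prop
    let Φ : (H →L[ℂ] H) →L[ℂ] ℂ := (innerSL ℂ g).comp (ContinuousLinearMap.apply ℂ H e)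
    have hΦ : ∀ T : H →L[ℂ] H, inner ℂ g (T e) = Φ T := fun T => rfl
    rw [hΦ, ← Φ.intervalIntegral_comp_comm]
    swap
    · apply Continuous.intervalIntegrable; fun_prop
    refine intervalIntegral.norm_integral_le_of_norm_le (by linarith)
      (Filter.Eventually.of_forall ?_) ?_
    · intro t _
      have e1 : (F ((t : ℂ) + (-a : ℝ) * I) • Res A (-a) t - F ((t : ℂ) + (a : ℝ) * I) • Res A a t)
         - (F ((t : ℂ) + (-a : ℝ) * I) • Res B (-a) t - F ((t : ℂ) + (a : ℝ) * I) • Res B a t) =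
         F ((t : ℂ) + (-a : ℝ) * I) • (Res A (-a) t - Res B (-a) t) -
          F ((t : ℂ) + (a : ℝ) * I) • (Res A a t - Res B a t) := by
        rw [smul_sub, smul_sub]; abel
      rw [e1, map_sub, map_smul, map_smul]
      refine (norm_sub_le _ _).trans ?_
      rw [norm_smul, norm_smul, hΦ, hΦ]
      have l1 := line_bound F a C hC (-a) t (by rw [abs_neg, abs_of_pos ha])
      have l2 := line_bound F a C hC a t (by rw [abs_of_pos ha])
      gcongr
    · apply Continuous.intervalIntegrable; fun_prop
  have hmain : (2 * Real.pi * I : ℂ) • (fA - fB) = (IA - IB) +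
      (((2 * Real.pi * I : ℂ) • fA - IA) - ((2 * Real.pi * I : ℂ) • fB - IB)) := by
    rw [smul_sub]; abel
  set E := ((2 * Real.pi * I : ℂ) • fA - IA) - ((2 * Real.pi * I : ℂ) • fB - IB) with hE
  have hEn : ‖E‖ ≤ 2 * η := by
    refine (norm_sub_le _ _).trans ?_
    linarith
  have hEe : ‖inner ℂ g (E e)‖ ≤ 2 * η := by
    refine (norm_inner_le_norm _ _).trans ?_
    have := E.le_opNorm e
    rw [he, mul_one] at this
    rw [hg, one_mul]; linarith
  have h2 : 2 * Real.pi * ‖inner ℂ g ((fA - fB) e)‖ ≤ ‖inner ℂ g ((IA - IB) e)‖ + 2 * η := by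
    have : 2 * Real.pi * ‖inner ℂ g ((fA - fB) e)‖ =
        ‖inner ℂ g (((2 * Real.pi * I : ℂ) • (fA - fB)) e)‖ := by
      have e5 : ‖(2 * Real.pi * I : ℂ)‖ = 2 * Real.pi := by simp [abs_of_pos hpi]
      rw [smul_apply, inner_smul_right, norm_mul, e5]
    rw [this, hmain, add_apply, inner_add_right]
    exact (norm_add_le _ _).trans (by linarith)
  rw [abs_neg, abs_of_pos ha] at hI
  have hsum : 2 * Real.pi * ∑ m, |l m| * wt C a N A B (u m) e g =
      C * (∑ m, |l m| * ((bet N B (-a) (u m) e + bet N A (- -a) (u m) g) / 2)) +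
      C * (∑ m, |l m| * ((bet N B a (u m) e + bet N A (-a) (u m) g) / 2)) := by
    rw [Finset.mul_sum, Finset.mul_sum, Finset.mul_sum, ← Finset.sum_add_distrib]
    apply Finset.sum_congr rfl
    intro m _
    unfold wt
    field_simp
  have h3 : 2 * Real.pi * ‖inner ℂ g ((fA - fB) e)‖ ≤ 2 * Real.pi *
      (∑ m, |l m| * wt C a N A B (u m) e g + δ * (C / a) + η) := by
    have e3 : C * (δ * (Real.pi / a)) = Real.pi * (δ * (C / a)) := by ring
    have : 2 * η ≤ 2 * Real.pi * η := by nlinarith [Real.pi_gt_three]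
    rw [mul_add, mul_add, hsum]
    linarith [hI, h2]
  exact le_of_mul_le_mul_left h3 (by positivity)

lemma holder_step {n k : ℕ} (w : Fin k → Fin n → ℝ) (hw : ∀ m i, 0 ≤ w m i) (l : Fin k → ℝ)
    (Q p : ℝ) (hp : 1 ≤ p) (hQ : 0 < Q) (h1 : ∀ i, ∑ m, w m i ≤ Q) (h2 : ∀ m, ∑ i, w m i ≤ Q) :
    ∑ i, (∑ m, |l m| * w m i) ^ p ≤ Q ^ p * ∑ m, |l m| ^ p := by
  have hp0 : 0 < p := by linarith
  have hpi : p⁻¹ ≤ 1 := inv_le_one_of_one_le₀ hp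
  have hi : ∀ i, (∑ m, |l m| * w m i) ^ p ≤ Q ^ (p - 1) * ∑ m, w m i * |l m| ^ p := by
    intro i
    have h := Real.inner_le_weight_mul_Lp_of_nonneg Finset.univ hp (fun m => w m i)
      (fun m => |l m|) (fun m => hw m i) (fun m => abs_nonneg _)
    have hnn : 0 ≤ ∑ m, w m i * |l m| ^ p :=
      Finset.sum_nonneg fun m _ => mul_nonneg (hw m i) (by positivity)
    have hs0 : 0 ≤ ∑ m, w m i := Finset.sum_nonneg fun m _ => hw m i
    have h' : ∑ m, |l m| * w m i ≤ Q ^ (1 - p⁻¹) * (∑ m, w m i * |l m| ^ p) ^ p⁻¹ := by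
      simp only [mul_comm (|l _|)]
      refine h.trans ?_
      gcongr
      exact h1 i
    have h0 : 0 ≤ ∑ m, |l m| * w m i :=
      Finset.sum_nonneg fun m _ => mul_nonneg (abs_nonneg _) (hw m i)
    calc _ ≤ (Q ^ (1 - p⁻¹) * (∑ m, w m i * |l m| ^ p) ^ p⁻¹) ^ p := by gcongr
      _ = _ := by
        rw [Real.mul_rpow (by positivity) (by positivity), ← Real.rpow_mul hQ.le,
          ← Real.rpow_mul hnn, inv_mul_cancel₀ hp0.ne', Real.rpow_one, sub_mul,
          inv_mul_cancel₀ hp0.ne', one_mul]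
  calc _ ≤ ∑ i, Q ^ (p - 1) * ∑ m, w m i * |l m| ^ p := Finset.sum_le_sum fun i _ => hi i
    _ = Q ^ (p - 1) * ∑ m, (∑ i, w m i) * |l m| ^ p := by
      rw [← Finset.mul_sum, Finset.sum_comm]
      simp only [Finset.sum_mul]
    _ ≤ Q ^ (p - 1) * ∑ m, Q * |l m| ^ p := by
      gcongr with m _
      exact h2 m
    _ = Q ^ p * ∑ m, |l m| ^ p := by
      rw [← Finset.mul_sum, ← mul_assoc, ← Real.rpow_add_one hQ.ne', sub_add_cancel]

end Fin1
section Fin2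
variable {H : Type*} [NormedAddCommGroup H] [InnerProductSpace ℂ H] [CompleteSpace H]

lemma orth_fin (e : ℕ → H) (n : ℕ)
    (h : ∀ i < n, ∀ j < n, inner ℂ (e i) (e j) = if i = j then (1:ℂ) else 0) :
    Orthonormal ℂ (fun i : Fin n => e i) := by
  rw [orthonormal_iff_ite]
  intro i j
  rw [h i i.2 j j.2]
  simp [Fin.ext_iff]

lemma bound_even {A B : H →L[ℂ] H} (hA : IsSelfAdjoint A) (hB : IsSelfAdjoint B) (F : ℂ → ℂ)
    (hF : Differentiable ℂ F) (a C : ℝ) (ha : 0 < a) (hC0 : 0 < C)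
    (hC : ∀ z : ℂ, |z.im| ≤ a → ‖F z‖ ≤ C) (p : ℝ) (hp : 1 ≤ p) (Sg : ℝ)
    (hS : ∀ k, ∑ j ∈ Finset.range k, singularValue (A - B) j ^ p ≤ Sg)
    (hs : ∀ ε : ℝ, 0 < ε → ∃ j, singularValue (A - B) j < ε) (n : ℕ) :
    ∑ i ∈ Finset.range n, singularValue
      (cfc (fun z : ℂ => F z.re) A - cfc (fun z : ℂ => F z.re) B) (2 * i) ^ p ≤
        (8 * (C / a)) ^ p * Sg := by
  set T := cfc (fun z : ℂ => F z.re) A - cfc (fun z : ℂ => F z.re) B with hT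
  have hSg : 0 ≤ Sg := by simpa using hS 0
  have hQ : 0 < C / a := by positivity
  induction n with
  | zero => simp; positivity
  | succ n ih =>
    by_cases h0 : singularValue T (2 * n) = 0
    · rw [Finset.sum_range_succ, h0, Real.zero_rpow (by linarith), add_zero]; exact ih
    have hpos : 0 < singularValue T (2 * n) := lt_of_le_of_ne (sv_nonneg _ _) (Ne.symm h0)
    set s := singularValue T (2 * n) with hsdef
    have hge : ∀ i < n + 1, s ≤ singularValue T (2 * i) := fun i hi =>
      sv_antitone T (by omega)
    obtain ⟨e, g, he, hg, heg⟩ := greedy T (n + 1) (fun i hi => hpos.trans_le (hge i hi))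
    have heo := orth_fin e (n + 1) he
    have hgo := orth_fin g (n + 1) hg
    have hδ : 0 < s / (8 * (C / a)) := by positivity
    obtain ⟨j, hj⟩ := hs (s / (8 * (C / a)) / 8) (by positivity)
    obtain ⟨k, u, l, hu, happ, hl⟩ := spec_final (A - B) (hA.sub hB) _ hδ j hj p hp Sg hS
    obtain ⟨N, hN, hkey⟩ := key hA hB F hF a C ha hC _ hδ.le u l happ (s / 8) (by positivity)
    have hh := holder_step (fun (m : Fin k) (i : Fin (n + 1)) => wt C a N A B (u m) (e i) (g i))
      (fun m i => wt_nonneg C a N hC0.le hN A B _ _ _) l (C / a) p hp hQ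
      (fun i => wt_sum_m hA hB C a N hC0.le ha hN u hu _ _ (heo.1 i) (hgo.1 i))
      (fun m => wt_sum_i hA hB C a N hC0.le ha hN _ (hu.1 m) _ _ heo hgo)
    have hδe : s / (8 * (C / a)) * (C / a) = s / 8 := by field_simp
    rw [hδe] at hkey
    have hone : ∀ i : Fin (n + 1), singularValue T (2 * i) ≤
        4 * ∑ m, |l m| * wt C a N A B (u m) (e i) (g i) := by
      intro i
      have h1 := heg i i.2
      have h2 := hkey (e i) (g i) (heo.1 i) (hgo.1 i)
      have h3 := hge i i.2
      linarith
    rw [Finset.sum_range]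
    calc ∑ i : Fin (n + 1), singularValue T (2 * i) ^ p
        ≤ ∑ i : Fin (n + 1), 4 ^ p * (∑ m, |l m| * wt C a N A B (u m) (e i) (g i)) ^ p := by
          apply Finset.sum_le_sum
          intro i _
          rw [← Real.mul_rpow (by norm_num) (Finset.sum_nonneg fun m _ =>
            mul_nonneg (abs_nonneg _) (wt_nonneg C a N hC0.le hN A B _ _ _))]
          exact Real.rpow_le_rpow (sv_nonneg _ _) (hone i) (by linarith)
      _ ≤ 4 ^ p * ((C / a) ^ p * (2 ^ p * Sg)) := by
          rw [← Finset.mul_sum]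
          gcongr
          refine hh.trans ?_
          gcongr
      _ = (8 * (C / a)) ^ p * Sg := by
          rw [show (8 : ℝ) * (C / a) = 4 * 2 * (C / a) by ring,
            Real.mul_rpow (by norm_num) hQ.le, Real.mul_rpow (by norm_num) (by norm_num)]
          ring

lemma even_sum (T : H →L[ℂ] H) (p : ℝ) (hp : 0 ≤ p) (n : ℕ) :
    ∑ j ∈ Finset.range (2 * n), singularValue T j ^ p ≤
      2 * ∑ i ∈ Finset.range n, singularValue T (2 * i) ^ p := by
  induction n with
  | zero => simp
  | succ n ih =>
    rw [show 2 * (n + 1) = 2 * n + 1 + 1 by ring, Finset.sum_range_succ, Finset.sum_range_succ,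
      Finset.sum_range_succ]
    have : singularValue T (2 * n + 1) ^ p ≤ singularValue T (2 * n) ^ p :=
      Real.rpow_le_rpow (sv_nonneg _ _) (sv_antitone T (by omega)) hp
    linarith

lemma bound_all {A B : H →L[ℂ] H} (hA : IsSelfAdjoint A) (hB : IsSelfAdjoint B) (F : ℂ → ℂ)
    (hF : Differentiable ℂ F) (a C : ℝ) (ha : 0 < a) (hC0 : 0 < C)
    (hC : ∀ z : ℂ, |z.im| ≤ a → ‖F z‖ ≤ C) (p : ℝ) (hp : 1 ≤ p) (Sg : ℝ)
    (hS : ∀ k, ∑ j ∈ Finset.range k, singularValue (A - B) j ^ p ≤ Sg) (n : ℕ) :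
    ∑ i ∈ Finset.range n, singularValue
      (cfc (fun z : ℂ => F z.re) A - cfc (fun z : ℂ => F z.re) B) i ^ p ≤
        (16 * (C / a)) ^ p * Sg := by
  have hs : ∀ ε : ℝ, 0 < ε → ∃ j, singularValue (A - B) j < ε := by
    intro ε hε
    by_contra! hcon
    obtain ⟨k, hk⟩ := exists_nat_gt (Sg / ε ^ p)
    rw [div_lt_iff₀ (by positivity)] at hk
    have h1 := hS k
    have h2 : ∑ j ∈ Finset.range k, ε ^ p ≤
        ∑ j ∈ Finset.range k, singularValue (A - B) j ^ p :=
      Finset.sum_le_sum fun j _ => Real.rpow_le_rpow hε.le (hcon j) (by linarith)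
    rw [Finset.sum_const, Finset.card_range, nsmul_eq_mul] at h2
    linarith
  have hSg : 0 ≤ Sg := by simpa using hS 0
  have h1 := bound_even hA hB F hF a C ha hC0 hC p hp Sg hS hs n
  set T := cfc (fun z : ℂ => F z.re) A - cfc (fun z : ℂ => F z.re) B with hT
  have h2 := even_sum T p (by linarith) n
  have h3 : ∑ i ∈ Finset.range n, singularValue T i ^ p ≤
      ∑ i ∈ Finset.range (2 * n), singularValue T i ^ p :=
    Finset.sum_le_sum_of_subset_of_nonneg
      (Finset.range_mono (by omega)) (fun i _ _ => Real.rpow_nonneg (sv_nonneg _ _) _)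
  have h4 : (2 : ℝ) ≤ 2 ^ p := by
    simpa using Real.rpow_le_rpow_of_exponent_le (by norm_num : (1 : ℝ) ≤ 2) hp
  have h5 : (16 * (C / a)) ^ p = 2 ^ p * (8 * (C / a)) ^ p := by
    rw [← Real.mul_rpow (by norm_num) (by positivity)]; ring_nf
  rw [h5, mul_assoc]
  have h6 : 0 ≤ (8 * (C / a)) ^ p * Sg := by positivity
  nlinarith

end Fin2

/-- Schatten-norm Bernstein-type inequality: there is an absolute constant `c > 0` such
that for `p ∈ [1,∞)`, any function `f` bandlimited with parameters `(σ, M)` (restriction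
to `ℝ` of an entire `F` with `|F z| ≤ M·exp(σ|Im z|)`), and all bounded self-adjoint
operators `A, B`,
`‖f(A) − f(B)‖_{S_p} ≤ c·σ·M·‖A − B‖_{S_p}` (both sides computed in `[0,∞]`). -/
theorem schatten_bandlimited_estimate :
    ∃ c : ℝ, 0 < c ∧
      ∀ (H : Type*) [NormedAddCommGroup H] [InnerProductSpace ℂ H] [CompleteSpace H],
      ∀ (p σ M : ℝ), 1 ≤ p → 0 < σ → 0 < M →
      ∀ (f : ℝ → ℂ) (F : ℂ → ℂ), Differentiable ℂ F →
        (∀ z : ℂ, ‖F z‖ ≤ M * Real.exp (σ * |z.im|)) →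
        (∀ x : ℝ, f x = F x) →
      ∀ (A B : H →L[ℂ] H), IsSelfAdjoint A → IsSelfAdjoint B →
        (∑' j : ℕ, ENNReal.ofReal
            (singularValue (cfc (fun z : ℂ => f z.re) A - cfc (fun z : ℂ => f z.re) B) j
              ^ p)) ^ (1 / p)
          ≤ ENNReal.ofReal (c * σ * M) *
              (∑' j : ℕ, ENNReal.ofReal (singularValue (A - B) j ^ p)) ^ (1 / p) := by
  refine ⟨16 * Real.exp 1, by positivity, ?_⟩
  intro H _ _ _ p σ M hp hσ hM f F hF hb hfF A B hA hB
  have hf : (fun z : ℂ => f z.re) = fun z : ℂ => F z.re := by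
    funext z; exact hfF _
  rw [hf]
  have hp0 : 0 < p := by linarith
  set X := ∑' j : ℕ, ENNReal.ofReal (singularValue (A - B) j ^ p) with hX
  by_cases hXt : X = ⊤
  · rw [hXt, ENNReal.top_rpow_of_pos (by positivity), ENNReal.mul_top]
    · exact le_top
    · rw [Ne, ENNReal.ofReal_eq_zero, not_le]
      positivity
  have hS : ∀ k, ∑ j ∈ Finset.range k, singularValue (A - B) j ^ p ≤ X.toReal := by
    intro k
    rw [← ENNReal.ofReal_le_iff_le_toReal hXt,
      ENNReal.ofReal_sum_of_nonneg (fun j _ => Real.rpow_nonneg (sv_nonneg _ _) _)]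
    exact ENNReal.sum_le_tsum _
  have hC : ∀ z : ℂ, |z.im| ≤ 1 / σ → ‖F z‖ ≤ Real.exp 1 * M := by
    intro z hz
    refine (hb z).trans ?_
    rw [mul_comm]
    gcongr
    rw [le_div_iff₀ hσ] at hz
    linarith
  have hall := bound_all hA hB F hF (1 / σ) (Real.exp 1 * M) (by positivity) (by positivity) hC
    p hp X.toReal hS
  have hc : 16 * (Real.exp 1 * M / (1 / σ)) = 16 * Real.exp 1 * σ * M := by
    field_simp
  rw [hc] at hall
  have hc0 : 0 ≤ 16 * Real.exp 1 * σ * M := by positivity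
  have hle : ∑' j : ℕ, ENNReal.ofReal (singularValue
      (cfc (fun z : ℂ => F z.re) A - cfc (fun z : ℂ => F z.re) B) j ^ p) ≤
      ENNReal.ofReal (16 * Real.exp 1 * σ * M) ^ p * X := by
    apply ENNReal.tsum_le_of_sum_range_le
    intro n
    rw [← ENNReal.ofReal_sum_of_nonneg (fun j _ => Real.rpow_nonneg (sv_nonneg _ _) _),
      ENNReal.ofReal_rpow_of_nonneg hc0 hp0.le]
    refine (ENNReal.ofReal_le_ofReal (hall n)).trans ?_
    rw [ENNReal.ofReal_mul (by positivity), ENNReal.ofReal_toReal hXt]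
  calc _ ≤ (ENNReal.ofReal (16 * Real.exp 1 * σ * M) ^ p * X) ^ (1 / p) :=
        ENNReal.rpow_le_rpow hle (by positivity)
    _ = _ := by
        rw [ENNReal.mul_rpow_of_nonneg _ _ (by positivity), ← ENNReal.rpow_mul,
          mul_one_div_cancel hp0.ne', ENNReal.rpow_one]
end

section
/- Let σ, M > 0 and let f : ℝ → ℂ be bandlimited with parameters (σ, M). Let A and K be bounded self-adjoint operators on a complex Hilbert space H. Then the map t ↦ f(A + t·K) from ℝ to the Banach space of bounded operators on H (with the operator norm) is continuously differentiable, and its derivative at every t ∈ ℝ satisfies ‖(d/dt) f(A + t·K)‖ ≤ σ·M·‖K‖. -/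
open Complex Filter Topology in
theorem bl_PL {k : ℂ → ℂ} {C B C' M : ℝ} (hk : ∀ z : ℂ, 0 ≤ z.re → DifferentiableAt ℂ k z)
    (hb : ∀ z : ℂ, 0 ≤ z.re → ‖k z‖ ≤ C * Real.exp (B * ‖z‖))
    (hr : ∀ x : ℝ, 0 ≤ x → ‖k x‖ ≤ C') (hi : ∀ y : ℝ, ‖k (y * I)‖ ≤ M)
    {z : ℂ} (hz : 0 ≤ z.re) : ‖k z‖ ≤ M := by
  refine PhragmenLindelof.right_half_plane_of_bounded_on_real (f := k) ?_ ?_ ?_ hi hz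
  · refine ⟨fun z hz => (hk z (le_of_lt hz)).differentiableWithinAt, fun z hz => ?_⟩
    have : z ∈ {z : ℂ | 0 ≤ z.re} := by
      have h1 : IsClosed {z : ℂ | 0 ≤ z.re} := isClosed_le continuous_const continuous_re
      have h2 : {z : ℂ | 0 < z.re} ⊆ {z : ℂ | 0 ≤ z.re} := fun w hw => le_of_lt (show 0 < w.re from hw)
      exact closure_minimal h2 h1 hz
    exact (hk z this).continuousAt.continuousWithinAt
  · refine ⟨1, by norm_num, B, ?_⟩
    refine Asymptotics.IsBigO.of_bound C ?_
    refine eventually_inf_principal.2 <| Eventually.of_forall fun z hz => ?_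
    have := hb z (le_of_lt hz)
    simpa using this
  · refine ⟨C', ?_⟩
    rw [eventually_map]
    filter_upwards [eventually_ge_atTop 0] with x hx using hr x hx

open Complex in
theorem bl_upper {g : ℂ → ℂ} {C M τ : ℝ} (hτ : 0 ≤ τ) (hC : 0 ≤ C) (hg : Differentiable ℂ g)
    (hb : ∀ z, ‖g z‖ ≤ C * Real.exp (τ * ‖z‖)) (hr : ∀ x : ℝ, ‖g x‖ ≤ M)
    (z : ℂ) (hz : 0 ≤ z.im) : ‖g z‖ ≤ M * Real.exp (τ * z.im) := by
  have key : ‖(fun w : ℂ => g (I * w) * exp (-(τ * w))) (-I * z)‖ ≤ M := by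
    refine bl_PL (k := fun w : ℂ => g (I * w) * exp (-(τ * w))) (C := C) (B := τ) (C' := C) ?_ ?_ ?_ ?_ (by simpa using hz)
    · intro w _
      have : Differentiable ℂ (fun w : ℂ => g (I * w) * exp (-(τ * w))) := by fun_prop
      exact this w
    · intro w hw
      simp only [norm_mul, norm_exp]
      have h1 := hb (I * w)
      have h2 : Real.exp (-(τ * w) : ℂ).re ≤ 1 := by
        simp; positivity
      calc _ ≤ ‖g (I * w)‖ * 1 := by gcongr
        _ ≤ _ := by simpa using h1
    · intro x hx
      simp only [norm_mul, norm_exp]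
      have h1 := hb (I * x)
      have h2 : (-(τ * x) : ℂ).re = -(τ * x) := by simp
      rw [h2]
      simp [abs_of_nonneg hx] at h1
      calc _ ≤ C * Real.exp (τ * x) * Real.exp (-(τ * x)) := by gcongr
        _ = C := by rw [mul_assoc, ← Real.exp_add]; simp
    · intro y
      have := hr (-y)
      have e : I * (y * I) = ((-y : ℝ) : ℂ) := by
        push_cast; linear_combination (y : ℂ) * I_mul_I
      simp only [norm_mul, norm_exp, e]
      simpa using this
  have e : I * (-I * z) = z := by linear_combination (-z) * I_mul_I
  simp only [norm_mul, norm_exp, e] at key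
  have h2 : (-(τ * (-I * z)) : ℂ).re = -(τ * z.im) := by simp
  rw [h2, Real.exp_neg] at key
  have hp := Real.exp_pos (τ * z.im)
  rwa [← div_eq_mul_inv, div_le_iff₀ hp] at key

open Complex in
theorem bl_type {g : ℂ → ℂ} {C M τ : ℝ} (hτ : 0 ≤ τ) (hC : 0 ≤ C) (hg : Differentiable ℂ g)
    (hb : ∀ z, ‖g z‖ ≤ C * Real.exp (τ * ‖z‖)) (hr : ∀ x : ℝ, ‖g x‖ ≤ M)
    (z : ℂ) : ‖g z‖ ≤ M * Real.exp (τ * |z.im|) := by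
  rcases le_total 0 z.im with h | h
  · rw [abs_of_nonneg h]; exact bl_upper hτ hC hg hb hr z h
  · rw [abs_of_nonpos h]
    have := bl_upper (g := fun z => g (-z)) hτ hC (by fun_prop) (fun z => by simpa using hb (-z))
      (fun x => by simpa using hr (-x)) (-z) (by simpa using h)
    simpa using this

open Complex in
theorem bl_reflect {g : ℂ → ℂ} {M τ R : ℝ} (hτ : 0 ≤ τ) (hM : 0 ≤ M) (hg : Differentiable ℂ g)
    (hb : ∀ z, ‖g z‖ ≤ M * Real.exp (τ * |z.im|)) (hR : M < R) (l : ℂ) (hl : ‖l‖ = R)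
    (y : ℝ) (hy : 0 ≤ y) :
    ‖g (-(y * I)) - l * exp (-(τ * I * (-(y * I))))‖ ≤ ‖g (y * I) - l * exp (-(τ * I * (y * I)))‖ := by
  set h : ℂ → ℂ := fun z => g z - l * exp (-(τ * I * z)) with hh
  have hd : Differentiable ℂ h := by fun_prop
  have hlow : ∀ w : ℂ, 0 ≤ w.re → (R - M) * Real.exp (τ * w.re) ≤ ‖h (I * w)‖ := by
    intro w hw
    have h1 := hb (I * w)
    have h2 : ‖l * exp (-(τ * I * (I * w)))‖ = R * Real.exp (τ * w.re) := by
      rw [norm_mul, norm_exp, hl]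
      congr 2
      have : (-(τ * I * (I * w)) : ℂ) = τ * w := by linear_combination (-τ * w) * I_mul_I
      rw [this]; simp
    have h3 := norm_sub_norm_le (l * exp (-(τ * I * (I * w)))) (g (I * w))
    rw [norm_sub_rev] at h3
    simp [abs_of_nonneg hw] at h1
    rw [h2] at h3
    show _ ≤ ‖g (I * w) - l * exp (-(τ * I * (I * w)))‖
    linarith
  have hup : ∀ w : ℂ, 0 ≤ w.re → ‖h (-I * w)‖ ≤ (M + R) * Real.exp (τ * w.re) := by
    intro w hw
    have h1 := hb (-I * w)
    have h2 : ‖l * exp (-(τ * I * (-I * w)))‖ = R * Real.exp (-(τ * w.re)) := by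
      rw [norm_mul, norm_exp, hl]
      congr 2
      have : (-(τ * I * (-I * w)) : ℂ) = -(τ * w) := by linear_combination (τ * w) * I_mul_I
      rw [this]; simp
    have h3 := norm_sub_le (g (-I * w)) (l * exp (-(τ * I * (-I * w))))
    simp [abs_of_nonneg hw] at h1
    rw [h2] at h3
    have h4 : Real.exp (-(τ * w.re)) ≤ Real.exp (τ * w.re) := by
      apply Real.exp_le_exp.2
      have : 0 ≤ τ * w.re := by positivity
      linarith
    have h5 : 0 ≤ R := by linarith
    have h6 : R * Real.exp (-(τ * w.re)) ≤ R * Real.exp (τ * w.re) := by gcongr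
    show ‖g (-I * w) - l * exp (-(τ * I * (-I * w)))‖ ≤ _
    simp only [neg_mul] at *
    linarith
  have hpos : ∀ w : ℂ, 0 ≤ w.re → 0 < ‖h (I * w)‖ := fun w hw =>
    lt_of_lt_of_le (mul_pos (by linarith) (Real.exp_pos _)) (hlow w hw)
  have hbd : ∀ w : ℂ, 0 ≤ w.re →
      ‖(starRingEnd ℂ) (h (-I * (starRingEnd ℂ) w)) / h (I * w)‖ ≤ (M + R) / (R - M) := by
    intro w hw
    rw [norm_div, RCLike.norm_conj, div_le_div_iff₀ (hpos w hw) (by linarith)]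
    have h1 := hlow w hw
    have h2 := hup ((starRingEnd ℂ) w) (by simpa using hw)
    simp only [conj_re] at h2
    have a1 : 0 < R - M := by linarith
    have a2 : 0 ≤ M + R := by linarith
    calc _ ≤ (M + R) * Real.exp (τ * w.re) * (R - M) := by gcongr
      _ = (M + R) * ((R - M) * Real.exp (τ * w.re)) := by ring
      _ ≤ _ := by gcongr
  have key : ‖(fun w : ℂ => (starRingEnd ℂ) (h (-I * (starRingEnd ℂ) w)) / h (I * w)) (y : ℂ)‖ ≤ 1 := by
    refine bl_PL (k := fun w : ℂ => (starRingEnd ℂ) (h (-I * (starRingEnd ℂ) w)) / h (I * w)) (C := (M + R) / (R - M)) (B := 0) (C' := (M + R) / (R - M)) ?_ ?_ ?_ ?_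
      (by simpa using hy)
    · intro w hw
      refine DifferentiableAt.div ?_ ?_ (norm_pos_iff.1 (hpos w hw))
      · have h1 : Differentiable ℂ (fun w => h (-I * w)) := by fun_prop
        have h2 := DifferentiableAt.conj_conj (h1 ((starRingEnd ℂ) w))
        simpa [Function.comp_def] using h2
      · have h1 : Differentiable ℂ (fun w => h (I * w)) := by fun_prop
        exact h1 w
    · intro w hw
      simpa using hbd w hw
    · intro x hx
      exact hbd x (by simpa using hx)
    · intro x
      have e : -I * (starRingEnd ℂ) (x * I) = I * (x * I) := by simp
      simp only [e, norm_div, RCLike.norm_conj]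
      exact div_self_le_one _
  simp only [norm_div, RCLike.norm_conj] at key
  rw [div_le_one (hpos y (by simpa using hy)), conj_ofReal] at key
  have e1 : -I * (y : ℂ) = -(y * I) := by ring
  rw [e1, mul_comm I] at key
  exact key

open Complex Topology Filter in
theorem bl_im {h : ℂ → ℂ} (hd : Differentiable ℂ h)
    (hh : ∀ y : ℝ, 0 ≤ y → ‖h (-(y * I))‖ ≤ ‖h (y * I)‖) :
    ((starRingEnd ℂ) (h 0) * deriv h 0).im ≤ 0 := by
  have h1 : HasDerivAt (fun y : ℝ => h (y * I)) (I * deriv h 0) 0 := by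
    have a : HasDerivAt (fun y : ℂ => h (y * I)) (deriv h 0 * I) ((0:ℝ):ℂ) := by
      have := HasDerivAt.comp ((0:ℝ):ℂ) (h₂ := h) (h := fun y : ℂ => y * I) (h' := I)
        (h₂' := deriv h 0) (by simpa using (hd 0).hasDerivAt)
        (by simpa using (hasDerivAt_id ((0:ℝ):ℂ)).mul_const I)
      exact this
    have := a.comp_ofReal
    rwa [mul_comm] at this
  have h2 : HasDerivAt (fun y : ℝ => h (-(y * I))) (-(I * deriv h 0)) 0 := by
    have := HasDerivAt.scomp (0:ℝ) (g₁ := fun y : ℝ => h (y * I)) (h := fun y : ℝ => -y)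
      (h' := -1) (g₁' := I * deriv h 0) (by simpa using h1) (hasDerivAt_neg 0)
    simpa [Function.comp_def] using this
  have h3 := h1.norm_sq.sub h2.norm_sq
  have h4 := h3.tendsto_slope_zero_right
  have h5 := ge_of_tendsto (b := 0) h4 (by
    filter_upwards [self_mem_nhdsWithin] with t ht
    have ht : 0 < t := ht
    have := hh t ht.le
    have h6 : ‖h (-(t * I))‖ ^ 2 ≤ ‖h (t * I)‖ ^ 2 := by gcongr
    simp
    apply mul_nonneg (by positivity)
    linarith)
  simp [Complex.inner] at h5
  simp
  linarith

open Complex in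
theorem bl_alg (g d : ℂ) (τ M R : ℝ) (hg : ‖g‖ ≤ M) (hR : M < R)
    (H : ∀ l : ℂ, ‖l‖ = R → ((starRingEnd ℂ) (g - l) * (d + τ * I * l)).im ≤ 0) (hτ : 0 ≤ τ) :
    ‖d‖ ≤ τ * R := by
  have hR0 : 0 < R := lt_of_le_of_lt ((norm_nonneg g).trans hg) hR
  rcases eq_or_ne d 0 with rfl | hd
  · simp; positivity
  have hn : (0:ℝ) < ‖d‖ := norm_pos_iff.2 hd
  have hnc : (‖d‖ : ℂ) ≠ 0 := by exact_mod_cast hn.ne'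
  obtain ⟨u, hu⟩ : ∃ u : ℂ, u = I * d / ‖d‖ := ⟨_, rfl⟩
  have hu1 : ‖u‖ = 1 := by rw [hu]; simp [hn.ne']
  have hdu : d = -I * u * ‖d‖ := by
    rw [hu]; field_simp; rw [I_sq]; ring
  have h1 := H (R * u) (by simp [hu1, abs_of_pos hR0])
  have hp : ((starRingEnd ℂ) g * u).re ≤ M := by
    refine (re_le_norm _).trans ?_
    simpa [hu1] using hg
  have hsq : u.re * u.re + u.im * u.im = 1 := by
    have := Complex.sq_norm u
    rw [hu1, normSq_apply] at this; linarith
  generalize ‖d‖ = n at *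
  rw [hdu] at h1
  simp at h1 hp
  by_contra hc
  push Not at hc
  have h2 : 0 < (R - (g.re * u.re + g.im * u.im)) * (n - τ * R) :=
    mul_pos (by linarith) (by linarith)
  nlinarith [congrArg (· * (R * (n - τ * R))) hsq]

open Complex in
theorem bl_bernstein0 {g : ℂ → ℂ} {M τ : ℝ} (hτ : 0 ≤ τ) (hM : 0 ≤ M) (hg : Differentiable ℂ g)
    (hb : ∀ z, ‖g z‖ ≤ M * Real.exp (τ * |z.im|)) : ‖deriv g 0‖ ≤ τ * M := by
  have hR : ∀ R, M < R → ‖deriv g 0‖ ≤ τ * R := by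
    intro R hR
    refine bl_alg (g 0) (deriv g 0) τ M R (by simpa using hb 0) hR (fun l hl => ?_) hτ
    have h1 := bl_im (h := fun z => g z - l * exp (-(τ * I * z))) (by fun_prop)
      (fun y hy => bl_reflect hτ hM hg hb hR l hl y hy)
    have h2 : HasDerivAt (fun z => g z - l * exp (-(τ * I * z))) (deriv g 0 + τ * I * l) 0 := by
      have a : HasDerivAt (fun z : ℂ => -(τ * I * z)) (-(τ * I)) 0 := by
        have := ((hasDerivAt_id (0:ℂ)).const_mul (-(τ * I)))
        simpa using this
      have := (hg 0).hasDerivAt.sub ((a.cexp).const_mul l)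
      refine HasDerivAt.congr_deriv this ?_
      simp only [mul_zero, neg_zero, exp_zero]; ring
    rw [h2.deriv] at h1
    simpa using h1
  have h1 : Filter.Tendsto (fun R => τ * R) (nhdsWithin M (Set.Ioi M)) (nhds (τ * M)) :=
    (Continuous.tendsto (by fun_prop) M).mono_left nhdsWithin_le_nhds
  refine ge_of_tendsto h1 ?_
  filter_upwards [self_mem_nhdsWithin] with R h using hR R h

theorem bl_bernstein {g : ℂ → ℂ} {M τ : ℝ} (hτ : 0 ≤ τ) (hM : 0 ≤ M) (hg : Differentiable ℂ g)
    (hb : ∀ z, ‖g z‖ ≤ M * Real.exp (τ * |z.im|)) (z : ℂ) :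
    ‖deriv g z‖ ≤ τ * M * Real.exp (τ * |z.im|) := by
  have := bl_bernstein0 (g := fun w => g (w + z)) (M := M * Real.exp (τ * |z.im|)) hτ
    (by positivity) (by fun_prop) (fun w => by
      refine (hb _).trans ?_
      rw [mul_assoc, ← Real.exp_add]
      gcongr
      rw [← mul_add]
      gcongr
      rw [Complex.add_im, add_comm]
      exact abs_add_le _ _)
  rw [deriv_comp_add_const] at this
  simpa [mul_assoc] using this

theorem bl_iter {g : ℂ → ℂ} {M τ : ℝ} (hτ : 0 ≤ τ) (hM : 0 ≤ M) (hg : Differentiable ℂ g)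
    (hb : ∀ z, ‖g z‖ ≤ M * Real.exp (τ * |z.im|)) (n : ℕ) :
    Differentiable ℂ (iteratedDeriv n g) ∧
      ∀ z, ‖iteratedDeriv n g z‖ ≤ τ ^ n * M * Real.exp (τ * |z.im|) := by
  induction n with
  | zero => simpa using ⟨hg, hb⟩
  | succ n ih =>
    rw [iteratedDeriv_succ]
    refine ⟨ih.1.deriv, fun z => ?_⟩
    have := bl_bernstein hτ (by positivity) ih.1 ih.2 z
    rw [pow_succ]
    convert this using 1
    ring

theorem bl_normpow {H : Type*} [NormedAddCommGroup H] [InnerProductSpace ℂ H]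
    (B : H →L[ℂ] H) (n : ℕ) : ‖B ^ n‖ ≤ ‖B‖ ^ n := by
  cases n with
  | zero => rw [pow_zero, pow_zero]; exact ContinuousLinearMap.norm_id_le
  | succ n => exact norm_pow_le' B (Nat.succ_pos n)

theorem bl_cfc {H : Type*} [NormedAddCommGroup H] [InnerProductSpace ℂ H] [CompleteSpace H]
    (F : ℂ → ℂ) (a : ℕ → ℂ) (C σ : ℝ) (hσ : 0 ≤ σ) (ha : ∀ n, ‖a n‖ ≤ C * (σ ^ n / n.factorial))
    (hF : ∀ z, ∑' n, a n * z ^ n = F z) (B : H →L[ℂ] H) (hB : IsSelfAdjoint B) :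
    cfc F B = ∑' n, a n • B ^ n := by
  have hs : ∀ r : ℝ, Summable (fun n : ℕ => C * ((σ * r) ^ n / n.factorial)) := fun r =>
    (Real.summable_pow_div_factorial (σ * r)).mul_left C
  have hbd : ∀ (r x : ℝ) (n : ℕ), 0 ≤ x → x ≤ r ^ n →
      ‖a n‖ * x ≤ C * ((σ * r) ^ n / n.factorial) := by
    intro r x n hx hxr
    have h0 := (norm_nonneg _).trans (ha n)
    calc _ ≤ C * (σ ^ n / n.factorial) * r ^ n := mul_le_mul (ha n) hxr hx h0
      _ = _ := by rw [mul_pow]; ring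
  have hsum : Summable (fun n => a n • B ^ n) := by
    refine Summable.of_norm_bounded (hs ‖B‖) (fun n => ?_)
    rw [norm_smul]
    exact hbd _ _ n (norm_nonneg _) (bl_normpow B n)
  have hone : ‖(1 : H →L[ℂ] H)‖ ≤ 1 := ContinuousLinearMap.norm_id_le
  have hnB : IsStarNormal B := hB.isStarNormal
  have h1 : TendstoUniformlyOn (fun N => fun z => ∑ n ∈ Finset.range N, a n * z ^ n)
      (fun z => ∑' n, a n * z ^ n) Filter.atTop (spectrum ℂ B) := by
    refine tendstoUniformlyOn_tsum_nat (hs ‖B‖) (fun n x hx => ?_)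
    rw [norm_mul]
    refine hbd _ _ n (norm_nonneg _) ?_
    rw [norm_pow]
    have := spectrum.norm_le_norm_mul_of_mem hx
    gcongr
    refine this.trans ?_
    exact mul_le_of_le_one_right (norm_nonneg _) hone
  have h2 := tendsto_cfc_fun (a := B) h1
    (Filter.Eventually.of_forall fun N => by fun_prop)
  have h3 : ∀ N, cfc (fun z => ∑ n ∈ Finset.range N, a n * z ^ n) B =
      ∑ n ∈ Finset.range N, a n • B ^ n := by
    intro N
    have e := cfc_sum (a := B) (fun n z => a n * z ^ n) (Finset.range N) (fun n _ => by fun_prop)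
    have e2 : (∑ n ∈ Finset.range N, fun z : ℂ => a n * z ^ n) =
      (fun z => ∑ n ∈ Finset.range N, a n * z ^ n) := by ext z; simp
    rw [e2] at e
    rw [e]
    refine Finset.sum_congr rfl fun n _ => ?_
    rw [cfc_const_mul (a n) (fun z => z ^ n) B (by fun_prop), cfc_pow_id B n]
  simp_rw [h3] at h2
  have h4 := hsum.hasSum.tendsto_sum_nat
  have h5 := tendsto_nhds_unique h2 h4
  rw [← h5]
  congr 1
  ext z
  exact (hF z).symm

theorem bl_opEntire {H : Type*} [NormedAddCommGroup H] [InnerProductSpace ℂ H] [CompleteSpace H]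
    (a : ℕ → ℂ) (C σ : ℝ) (hσ : 0 ≤ σ) (ha : ∀ n, ‖a n‖ ≤ C * (σ ^ n / n.factorial))
    (A K : H →L[ℂ] H) :
    Differentiable ℂ (fun z : ℂ => ∑' n, a n • (A + z • K) ^ n) ∧
    ∀ z : ℂ, ‖∑' n, a n • (A + z • K) ^ n‖ ≤
      C * Real.exp (σ * ‖A‖) * Real.exp (σ * ‖K‖ * ‖z‖) := by
  have hs : ∀ r : ℝ, Summable (fun n : ℕ => C * ((σ * r) ^ n / n.factorial)) := fun r =>
    (Real.summable_pow_div_factorial (σ * r)).mul_left C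
  have hbd : ∀ (r : ℝ) (z : ℂ) (n : ℕ), ‖z‖ ≤ r →
      ‖a n • (A + z • K) ^ n‖ ≤ C * ((σ * (‖A‖ + r * ‖K‖)) ^ n / n.factorial) := by
    intro r z n hz
    have h0 := (norm_nonneg _).trans (ha n)
    have h1 : ‖A + z • K‖ ≤ ‖A‖ + r * ‖K‖ := by
      refine (norm_add_le _ _).trans ?_
      rw [norm_smul]
      gcongr
    have h2 : ‖(A + z • K) ^ n‖ ≤ (‖A‖ + r * ‖K‖) ^ n :=
      (bl_normpow _ n).trans (by gcongr)
    rw [norm_smul]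
    calc _ ≤ C * (σ ^ n / n.factorial) * (‖A‖ + r * ‖K‖) ^ n :=
          mul_le_mul (ha n) h2 (norm_nonneg _) h0
      _ = _ := by rw [mul_pow]; ring
  constructor
  · intro z
    have h1 := Complex.differentiableOn_tsum_of_summable_norm
      (F := fun n (z : ℂ) => a n • (A + z • K) ^ n) (U := Metric.ball 0 (‖z‖ + 1))
      (hs (‖A‖ + (‖z‖ + 1) * ‖K‖))
      (fun n => by
        have : Differentiable ℂ (fun z : ℂ => a n • (A + z • K) ^ n) := by fun_prop
        exact this.differentiableOn) Metric.isOpen_ball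
      (fun n w hw => hbd _ w n (by simpa using (mem_ball_zero_iff.1 hw).le))
    exact h1.differentiableAt (Metric.isOpen_ball.mem_nhds (by simp))
  · intro z
    have h1 := tsum_of_norm_bounded (hs (‖A‖ + ‖z‖ * ‖K‖)).hasSum (fun n => hbd ‖z‖ z n le_rfl)
    refine h1.trans (le_of_eq ?_)
    rw [tsum_mul_left, mul_assoc, ← Real.exp_add]
    congr 1
    rw [Real.exp_eq_exp_ℝ, NormedSpace.exp_eq_tsum_div]
    congr 1
    ext n
    congr 2
    ring


theorem bl_vec {E : Type*} [NormedAddCommGroup E] [NormedSpace ℂ E] [CompleteSpace E]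
    (G : ℂ → E) (hGd : Differentiable ℂ G) {C M τ : ℝ} (hC : 0 ≤ C) (hM : 0 ≤ M) (hτ : 0 ≤ τ)
    (hGb : ∀ z, ‖G z‖ ≤ C * Real.exp (τ * ‖z‖)) (hGr : ∀ t : ℝ, ‖G t‖ ≤ M) :
    ContDiff ℝ 1 (fun t : ℝ => G t) ∧ ∀ t : ℝ, ‖deriv (fun t : ℝ => G t) t‖ ≤ τ * M := by
  refine ⟨?_, fun t => ?_⟩
  · have h1 : ContDiff ℂ 1 G := hGd.contDiff
    exact (h1.restrict_scalars ℝ).comp Complex.ofRealCLM.contDiff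
  · have h1 : HasDerivAt (fun t : ℝ => G t) (deriv G t) t := by
      have h0 := HasDerivAt.scomp t (hGd (t : ℂ)).hasDerivAt (Complex.ofRealCLM.hasDerivAt (x := t))
      simpa [Function.comp_def] using h0
    rw [h1.deriv]
    obtain ⟨φ, hφ1, hφ2⟩ := exists_dual_vector'' ℂ (deriv G (t : ℂ))
    have hle : ∀ B, ‖φ B‖ ≤ ‖B‖ := fun B => by
      refine (φ.le_opNorm B).trans ?_
      exact mul_le_of_le_one_left (norm_nonneg _) hφ1
    have hd : Differentiable ℂ (fun z => φ (G z)) := φ.differentiable.comp hGd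
    have h2 := bl_type (g := fun z => φ (G z)) hτ hC hd
      (fun z => (hle _).trans (hGb z)) (fun x => (hle _).trans (hGr x))
    have h3 := bl_bernstein hτ hM hd h2 t
    have h4 : deriv (fun z => φ (G z)) t = φ (deriv G t) :=
      (φ.hasFDerivAt.comp_hasDerivAt (t : ℂ) (hGd t).hasDerivAt).deriv
    rw [h4, hφ2] at h3
    simpa using h3

theorem bl_coef {F : ℂ → ℂ} {M σ : ℝ} (hσ : 0 ≤ σ) (hM : 0 ≤ M) (hF : Differentiable ℂ F)
    (hFbound : ∀ z, ‖F z‖ ≤ M * Real.exp (σ * |z.im|)) :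
    ∃ a : ℕ → ℂ, (∀ n, ‖a n‖ ≤ M * (σ ^ n / n.factorial)) ∧ ∀ z, ∑' n, a n * z ^ n = F z := by
  refine ⟨fun n => (n.factorial : ℂ)⁻¹ * iteratedDeriv n F 0, fun n => ?_, fun z => ?_⟩
  · have h1 := (bl_iter hσ hM hF hFbound n).2 0
    simp at h1
    simp only [norm_mul, norm_inv, Complex.norm_natCast]
    calc _ ≤ (n.factorial : ℝ)⁻¹ * (σ ^ n * M) := by gcongr
      _ = _ := by ring
  · have := Complex.taylorSeries_eq_of_entire' 0 z hF
    simpa using this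

theorem bl_sa {H : Type*} [NormedAddCommGroup H] [InnerProductSpace ℂ H] [CompleteSpace H]
    (f : ℝ → ℂ) (F : ℂ → ℂ) (hfF : ∀ x : ℝ, f x = F x) (B : H →L[ℂ] H) (hB : IsSelfAdjoint B) :
    cfc (fun z : ℂ => f z.re) B = cfc F B := by
  refine cfc_congr fun z hz => ?_
  have h1 := hB.mem_spectrum_eq_re hz
  show f z.re = F z
  rw [hfF, ← h1]

theorem bl_bd {H : Type*} [NormedAddCommGroup H] [InnerProductSpace ℂ H] [CompleteSpace H]
    {F : ℂ → ℂ} {M σ : ℝ} (hM : 0 ≤ M) 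
    (hFbound : ∀ z, ‖F z‖ ≤ M * Real.exp (σ * |z.im|)) (B : H →L[ℂ] H) (hB : IsSelfAdjoint B) :
    ‖cfc F B‖ ≤ M := by
  refine norm_cfc_le hM fun z hz => ?_
  have h1 := hB.im_eq_zero_of_mem_spectrum hz
  simpa [h1] using hFbound z

theorem bl_line {H : Type*} [NormedAddCommGroup H] [InnerProductSpace ℂ H] [CompleteSpace H]
    (A K : H →L[ℂ] H) (hA : IsSelfAdjoint A) (hK : IsSelfAdjoint K) (t : ℝ) :
    IsSelfAdjoint (A + t • K) := by
  have e : (t : ℂ) • K = t • K := Complex.coe_smul t K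
  rw [← e]
  have h1 : IsSelfAdjoint (t : ℂ) := Complex.conj_ofReal t
  exact IsSelfAdjoint.add hA (IsSelfAdjoint.smul h1 hK)



/-- Operator differentiability for bandlimited functions (which lie in the Besov class
`B¹_{∞,1}(ℝ)`): if `f : ℝ → ℂ` is the restriction of an entire `F` with
`|F z| ≤ M·exp(σ|Im z|)`, and `A, K` are bounded self-adjoint operators, then
`t ↦ f(A + tK)` is continuously differentiable in the operator norm and its derivative
satisfies `‖(d/dt) f(A + tK)‖ ≤ σ·M·‖K‖` for every `t`. -/
theorem operator_differentiable_bandlimited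
    {H : Type*} [NormedAddCommGroup H] [InnerProductSpace ℂ H] [CompleteSpace H]
    (σ M : ℝ) (hσ : 0 < σ) (hM : 0 < M)
    (f : ℝ → ℂ) (F : ℂ → ℂ) (hF : Differentiable ℂ F)
    (hFbound : ∀ z : ℂ, ‖F z‖ ≤ M * Real.exp (σ * |z.im|))
    (hfF : ∀ x : ℝ, f x = F x)
    (A K : H →L[ℂ] H) (hA : IsSelfAdjoint A) (hK : IsSelfAdjoint K) :
    ContDiff ℝ 1 (fun t : ℝ => cfc (fun z : ℂ => f z.re) (A + t • K)) ∧
    ∀ t : ℝ,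
      ‖deriv (fun t : ℝ => cfc (fun z : ℂ => f z.re) (A + t • K)) t‖ ≤ σ * M * ‖K‖ := by
  obtain ⟨a, ha, hFs⟩ := bl_coef hσ.le hM.le hF hFbound
  obtain ⟨hGd, hGb⟩ := bl_opEntire a M σ hσ.le ha A K
  have hGF : ∀ t : ℝ, cfc F (A + t • K) = ∑' n, a n • (A + (t : ℂ) • K) ^ n := by
    intro t
    have h := bl_cfc F a M σ hσ.le ha hFs _ (bl_line A K hA hK t)
    have e : (t : ℂ) • K = t • K := Complex.coe_smul t K
    rw [h, e]
  have hfun : (fun t : ℝ => cfc (fun z : ℂ => f z.re) (A + t • K)) =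
      fun t : ℝ => ∑' n, a n • (A + (t : ℂ) • K) ^ n := by
    funext t
    exact (bl_sa f F hfF _ (bl_line A K hA hK t)).trans (hGF t)
  have key := bl_vec (fun z : ℂ => ∑' n, a n • (A + z • K) ^ n) hGd (by positivity) hM.le
    (τ := σ * ‖K‖) (by positivity) hGb (fun t => by
      have := bl_bd hM.le hFbound _ (bl_line A K hA hK t)
      rwa [hGF] at this)
  rw [hfun]
  refine ⟨key.1, fun t => (key.2 t).trans (le_of_eq (by ring))⟩
end

section
/- There is an absolute constant c > 0 with the following property. Let σ, M > 0 and let F : ℂ² → ℂ be an entire function satisfying |F(z₁, z₂)| ≤ M·exp(σ·(|Im z₁| + |Im z₂|)) for all (z₁, z₂) ∈ ℂ², and define f : ℂ → ℂ by f(x + i·y) = F(x, y) for x, y ∈ ℝ (so f, viewed as a bounded function on ℝ², has Fourier transform supported in [−σ, σ] × [−σ, σ]). Then for all bounded normal operators N₁ and N₂ on a complex Hilbert space, ‖f(N₁) − f(N₂)‖ ≤ c·σ·M·‖N₁ − N₂‖. -/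
section
open Complex MeasureTheory Filter Topology


noncomputable def nlbRes (α t x : ℝ) : ℂ := ((t : ℂ) + α * I - x)⁻¹

lemma nlb_den_ne {α : ℝ} (hα : 1 ≤ |α|) (t x : ℝ) : ((t : ℂ) + α * I - x) ≠ 0 := by
  intro h
  have := congrArg Complex.im h
  simp at this
  subst this
  norm_num at hα

lemma nlb_res_cont {α : ℝ} (hα : 1 ≤ |α|) {X : Type*} [TopologicalSpace X] {f g : X → ℝ}
    (hf : Continuous f) (hg : Continuous g) : Continuous (fun y => nlbRes α (f y) (g y)) := by
  unfold nlbRes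
  exact Continuous.inv₀ (by fun_prop) (fun y => nlb_den_ne hα _ _)

lemma nlb_res_sq_eq (α t x : ℝ) : ‖nlbRes α t x‖ ^ 2 = (α ^ 2 + (t - x) ^ 2)⁻¹ := by
  unfold nlbRes
  rw [norm_inv, inv_pow, ← Complex.normSq_eq_norm_sq, Complex.normSq_apply]
  simp
  ring

lemma nlb_res_sq_le {α : ℝ} (hα : 1 ≤ |α|) (t x : ℝ) :
    ‖nlbRes α t x‖ ^ 2 ≤ (1 + (t - x) ^ 2)⁻¹ := by
  rw [nlb_res_sq_eq]
  have : 1 ≤ α ^ 2 := by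
    rw [← sq_abs]; nlinarith
  gcongr

lemma nlb_res_le_one {α : ℝ} (hα : 1 ≤ |α|) (t x : ℝ) : ‖nlbRes α t x‖ ≤ 1 := by
  have h := nlb_res_sq_le hα t x
  have h2 : (1 + (t - x) ^ 2)⁻¹ ≤ 1 := inv_le_one_of_one_le₀ (by nlinarith [sq_nonneg (t - x)])
  nlinarith [norm_nonneg (nlbRes α t x)]

lemma nlb_res_le_res {α : ℝ} (hα : 1 ≤ |α|) (t x : ℝ) : ‖nlbRes α t x‖ ≤ ‖nlbRes 1 t x‖ := by
  have h := nlb_res_sq_le hα t x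
  have h2 := nlb_res_sq_eq 1 t x
  rw [one_pow] at h2
  rw [← h2] at h
  exact le_of_sq_le_sq h (norm_nonneg _)
where le_of_sq_le_sq {a b : ℝ} (h : a ^ 2 ≤ b ^ 2) (hb : 0 ≤ b) : a ≤ b := by nlinarith

lemma nlb_res_mul_le {α β : ℝ} (hα : 1 ≤ |α|) (hβ : 1 ≤ |β|) (t x : ℝ) :
    ‖nlbRes α t x * nlbRes β t x‖ ≤ (1 + (t - x) ^ 2)⁻¹ := by
  rw [norm_mul]
  have h := nlb_res_sq_le hα t x
  have h2 := nlb_res_sq_le hβ t x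
  nlinarith [sq_nonneg (‖nlbRes α t x‖ - ‖nlbRes β t x‖)]

lemma nlb_shift_integrable (x : ℝ) : Integrable (fun t : ℝ => (1 + (t - x) ^ 2)⁻¹) :=
  integrable_inv_one_add_sq.comp_sub_right x

lemma nlb_int_scalar {α β : ℝ} (hα : 1 ≤ |α|) (hβ : 1 ≤ |β|) (x : ℝ) (g : ℝ → ℂ)
    (hg : Continuous g) (C : ℝ) (hC : ∀ t, ‖g t‖ ≤ C) :
    Integrable (fun t => nlbRes α t x * nlbRes β t x * g t) := by
  refine Integrable.mono' ((nlb_shift_integrable x).mul_const C)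
    (Continuous.aestronglyMeasurable ?_) (.of_forall fun t => ?_)
  · exact ((nlb_res_cont hα continuous_id continuous_const).mul
      (nlb_res_cont hβ continuous_id continuous_const)).mul hg
  · rw [norm_mul]
    exact mul_le_mul (nlb_res_mul_le hα hβ t x) (hC t) (norm_nonneg _) (by positivity)

noncomputable def nlbKap : ℂ :=
  (∫ t : ℝ, nlbRes (-1) t 0 * nlbRes 1 t 0) - ∫ t : ℝ, nlbRes 1 t 0 * nlbRes 3 t 0

lemma nlb_kap_ne : nlbKap ≠ 0 := by
  have i1 : Integrable (fun t => nlbRes (-1) t 0 * nlbRes 1 t 0) := by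
    simpa using nlb_int_scalar (α := -1) (β := 1) (by norm_num) (by norm_num) 0 (fun _ => 1)
      continuous_const 1 (by simp)
  have i2 : Integrable (fun t => nlbRes 1 t 0 * nlbRes 3 t 0) := by
    simpa using nlb_int_scalar (α := 1) (β := 3) (by norm_num) (by norm_num) 0 (fun _ => 1)
      continuous_const 1 (by simp)
  unfold nlbKap
  rw [← integral_sub i1 i2]
  intro h
  have h2 := congrArg Complex.re h
  have h3 := integral_re (𝕜 := ℂ) (i1.sub i2)
  simp only [Pi.sub_apply] at h3
  have h4 : (∫ t : ℝ, 12 * (1 + t ^ 2)⁻¹ * (9 + t ^ 2)⁻¹) = 0 := by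
    have : (∫ t : ℝ, 12 * (1 + t ^ 2)⁻¹ * (9 + t ^ 2)⁻¹) =
      ∫ t : ℝ, RCLike.re (nlbRes (-1) t 0 * nlbRes 1 t 0 - nlbRes 1 t 0 * nlbRes 3 t 0) := by
      congr 1
      ext t
      unfold nlbRes
      have a1 : (1 + t ^ 2) ≠ 0 := by positivity
      have a9 : (9 + t ^ 2) ≠ 0 := by positivity
      have a1' : (t ^ 2 + 1) ≠ 0 := by positivity
      have a9' : (t ^ 2 + 3 ^ 2) ≠ 0 := by positivity
      simp [Complex.inv_re, Complex.inv_im, Complex.normSq_apply, ← pow_two]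
      field_simp
      ring
    rw [this, h3]
    exact h2
  have i3 : Integrable (fun t : ℝ => 12 * (1 + t ^ 2)⁻¹ * (9 + t ^ 2)⁻¹) := by
    refine Integrable.mono' (integrable_inv_one_add_sq.const_mul 12)
      (Continuous.aestronglyMeasurable ?_) (.of_forall fun t => ?_)
    · exact (continuous_const.mul (Continuous.inv₀ (by fun_prop) (fun t => by positivity))).mul
        (Continuous.inv₀ (by fun_prop) (fun t => by positivity))
    · rw [Real.norm_of_nonneg (by positivity)]
      have : (9 + t ^ 2)⁻¹ ≤ 1 := inv_le_one_of_one_le₀ (by nlinarith [sq_nonneg t])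
      exact mul_le_of_le_one_right (by positivity) this
  have h5 : 0 < ∫ t : ℝ, 12 * (1 + t ^ 2)⁻¹ * (9 + t ^ 2)⁻¹ := by
    rw [integral_pos_iff_support_of_nonneg (fun t => by positivity) i3]
    have : Function.support (fun t : ℝ => 12 * (1 + t ^ 2)⁻¹ * (9 + t ^ 2)⁻¹) = Set.univ := by
      ext t
      simp only [Function.mem_support, Set.mem_univ, iff_true]
      positivity
    rw [this]; simp
  linarith

lemma nlb_scalar_zero (g : ℂ → ℂ) (hg : Differentiable ℂ g) (C : ℝ)
    (hC : ∀ z : ℂ, |z.im| ≤ 1 → ‖g z‖ ≤ C) :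
    (∫ t : ℝ, nlbRes (-1) t 0 * nlbRes 1 t 0 * g (t + (-1 : ℝ) * I)) -
      (∫ t : ℝ, nlbRes 1 t 0 * nlbRes 3 t 0 * g (t + (1 : ℝ) * I)) = nlbKap * g 0 := by
  have hC0 : 0 ≤ C := (norm_nonneg _).trans (hC 0 (by simp))
  set G : ℂ → ℂ := fun z => dslope g 0 z * (z + 2 * I)⁻¹ with hG
  have hd : Differentiable ℂ (dslope g 0) := by
    rw [← differentiableOn_univ]
    exact (Complex.differentiableOn_dslope (by simp)).2 hg.differentiableOn
  have hGd : ∀ z : ℂ, |z.im| ≤ 1 → DifferentiableAt ℂ G z := by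
    intro z hz
    refine (hd z).mul (DifferentiableAt.inv (by fun_prop) ?_)
    intro h
    have := congrArg Complex.im h
    simp at this
    rw [abs_le] at hz
    linarith
  have e1 : ∀ t : ℝ, G (t + (-1 : ℝ) * I) =
      nlbRes (-1) t 0 * nlbRes 1 t 0 * (g (t + (-1 : ℝ) * I) - g 0) := by
    intro t
    have : (t + (-1 : ℝ) * I : ℂ) ≠ 0 := by simpa using nlb_den_ne (α := -1) (by norm_num) t 0
    simp only [hG]
    rw [dslope_of_ne _ this, slope_def_field]
    unfold nlbRes
    have e : (t + (-1 : ℝ) * I + 2 * I : ℂ) = t + (1 : ℝ) * I - (0 : ℝ) := by push_cast; ring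
    rw [e]
    simp
    ring
  have e2 : ∀ t : ℝ, G (t + (1 : ℝ) * I) =
      nlbRes 1 t 0 * nlbRes 3 t 0 * (g (t + (1 : ℝ) * I) - g 0) := by
    intro t
    have : (t + (1 : ℝ) * I : ℂ) ≠ 0 := by simpa using nlb_den_ne (α := 1) (by norm_num) t 0
    simp only [hG]
    rw [dslope_of_ne _ this, slope_def_field]
    unfold nlbRes
    have e : (t + (1 : ℝ) * I + 2 * I : ℂ) = t + (3 : ℝ) * I - (0 : ℝ) := by push_cast; ring
    rw [e]
    simp
    ring
  have cg : ∀ a : ℝ, Continuous (fun t : ℝ => g (t + a * I)) := fun a =>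
    hg.continuous.comp (by fun_prop)
  have bg : ∀ a : ℝ, |a| ≤ 1 → ∀ t : ℝ, ‖g (t + a * I)‖ ≤ C := fun a ha t => hC _ (by simpa using ha)
  have i1 := nlb_int_scalar (α := -1) (β := 1) (by norm_num) (by norm_num) 0 _ (cg (-1)) C
    (bg (-1) (by norm_num))
  have i2 := nlb_int_scalar (α := 1) (β := 3) (by norm_num) (by norm_num) 0 _ (cg 1) C
    (bg 1 (by norm_num))
  have i1' := nlb_int_scalar (α := -1) (β := 1) (by norm_num) (by norm_num) 0 (fun _ => g 0)
    continuous_const _ (fun _ => le_rfl)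
  have i2' := nlb_int_scalar (α := 1) (β := 3) (by norm_num) (by norm_num) 0 (fun _ => g 0)
    continuous_const _ (fun _ => le_rfl)
  have I1 : Integrable (fun t : ℝ => G (t + (-1 : ℝ) * I)) := by
    simp_rw [e1, mul_sub]; exact i1.sub i1'
  have I2 : Integrable (fun t : ℝ => G (t + (1 : ℝ) * I)) := by
    simp_rw [e2, mul_sub]; exact i2.sub i2'
  have key : (∫ t : ℝ, G (t + (-1 : ℝ) * I)) - ∫ t : ℝ, G (t + (1 : ℝ) * I) = 0 := by
    have t1 := intervalIntegral_tendsto_integral I1 (tendsto_neg_atTop_atBot (G := ℝ)) tendsto_id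
    have t2 := intervalIntegral_tendsto_integral I2 (tendsto_neg_atTop_atBot (G := ℝ)) tendsto_id
    have t12 := t1.sub t2
    refine tendsto_nhds_unique t12 ?_
    have side : ∀ R : ℝ, 0 < |R| → ‖∫ y : ℝ in (-1 : ℝ)..1, G ((R : ℂ) + y * I)‖ ≤
        (2 * C * (|R|⁻¹ * |R|⁻¹)) * |1 - (-1)| := by
      intro R hR
      refine intervalIntegral.norm_integral_le_of_norm_le_const fun y hy => ?_
      rw [Set.uIoc_of_le (by norm_num)] at hy
      have hy1 : |y| ≤ 1 := abs_le.2 ⟨hy.1.le, hy.2⟩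
      have n1 : |R| ≤ ‖(R : ℂ) + y * I‖ := by
        simpa using Complex.abs_re_le_norm ((R : ℂ) + y * I)
      have n2 : |R| ≤ ‖(R : ℂ) + y * I + 2 * I‖ := by
        simpa using Complex.abs_re_le_norm ((R : ℂ) + y * I + 2 * I)
      have hne : (R : ℂ) + y * I ≠ 0 := by
        rw [← norm_pos_iff]; linarith
      simp only [hG]
      rw [dslope_of_ne _ hne, slope_def_field, norm_mul, norm_div, norm_inv, sub_zero, div_eq_mul_inv,
        mul_assoc]
      have : ‖g ((R : ℂ) + y * I) - g 0‖ ≤ 2 * C := by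
        refine (norm_sub_le _ _).trans ?_
        have := hC ((R : ℂ) + y * I) (by simpa using hy1)
        have := hC 0 (by simp)
        linarith
      gcongr
    have eqn : ∀ᶠ R : ℝ in atTop, ((∫ t : ℝ in (-R)..(id R), G (t + (-1 : ℝ) * I)) -
        ∫ t : ℝ in (-R)..(id R), G (t + (1 : ℝ) * I)) =
        I • (∫ y : ℝ in (-1 : ℝ)..1, G (((-R : ℝ) : ℂ) + y * I)) -
          I • ∫ y : ℝ in (-1 : ℝ)..1, G ((R : ℂ) + y * I) := by
      filter_upwards with R
      have := Complex.integral_boundary_rect_eq_zero_of_differentiableOn G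
        (⟨-R, -1⟩ : ℂ) (⟨R, 1⟩ : ℂ) (by
          intro z hz
          refine (hGd z ?_).differentiableWithinAt
          have := hz.2
          simp only [Set.mem_preimage] at this
          rw [Set.uIcc_of_le (by norm_num)] at this
          exact abs_le.2 this)
      simp only [id]
      linear_combination this
    rw [tendsto_congr' eqn]
    have lim0 : Tendsto (fun R : ℝ => (2 * C * (|R|⁻¹ * |R|⁻¹)) * |1 - (-1 : ℝ)|) atTop (𝓝 0) := by
      have h0 : Tendsto (fun R : ℝ => |R|⁻¹) atTop (𝓝 0) :=
        tendsto_inv_atTop_zero.comp tendsto_abs_atTop_atTop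
      have := (((h0.mul h0).const_mul (2 * C)).mul_const (|1 - (-1 : ℝ)|))
      simpa using this
    have s1 : Tendsto (fun R : ℝ => ∫ y : ℝ in (-1 : ℝ)..1, G ((R : ℂ) + y * I)) atTop (𝓝 0) := by
      refine squeeze_zero_norm' ?_ lim0
      filter_upwards [eventually_gt_atTop 0] with R hR
      exact side R (abs_pos.2 hR.ne')
    have s2 : Tendsto (fun R : ℝ => ∫ y : ℝ in (-1 : ℝ)..1, G (((-R : ℝ) : ℂ) + y * I)) atTop
        (𝓝 0) := by
      refine squeeze_zero_norm' ?_ lim0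
      filter_upwards [eventually_gt_atTop 0] with R hR
      have := side (-R) (by simpa using hR.ne')
      rwa [abs_neg] at this
    simpa using (s2.const_smul I).sub (s1.const_smul I)
  simp_rw [e1, e2, mul_sub] at key
  rw [integral_sub i1 i1', integral_sub i2 i2', integral_mul_const, integral_mul_const] at key
  unfold nlbKap
  linear_combination key

def nlbAl (s : Bool) : ℝ := if s then 1 else -1
noncomputable def nlbCc (s : Bool) : ℂ := if s then -nlbKap⁻¹ else nlbKap⁻¹
noncomputable def nlbKer (s : Bool) (t x : ℝ) : ℂ :=
  nlbCc s * (nlbRes (nlbAl s) t x * nlbRes (nlbAl s + 2) t x)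

lemma nlb_al1 (s : Bool) : 1 ≤ |nlbAl s| := by cases s <;> simp [nlbAl]
lemma nlb_al1' (s : Bool) : |nlbAl s| ≤ 1 := by cases s <;> simp [nlbAl]
lemma nlb_al2 (s : Bool) : 1 ≤ |nlbAl s + 2| := by cases s <;> norm_num [nlbAl]
lemma nlb_cc (s : Bool) : ‖nlbCc s‖ = ‖nlbKap⁻¹‖ := by cases s <;> simp [nlbCc]

lemma nlb_scalar (g : ℂ → ℂ) (hg : Differentiable ℂ g) (C : ℝ)
    (hC : ∀ z : ℂ, |z.im| ≤ 1 → ‖g z‖ ≤ C) (x : ℝ) :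
    ∑ s : Bool, ∫ t : ℝ, nlbKer s t x * g (t + nlbAl s * I) = g x := by
  have h := nlb_scalar_zero (fun z => g (z + x)) (hg.comp (by fun_prop)) C
    (fun z hz => hC _ (by simpa using hz))
  have r : ∀ α t : ℝ, nlbRes α t 0 = nlbRes α (t + x) x := by
    intro α t; unfold nlbRes; push_cast; congr 1; ring
  have q : ∀ a t : ℝ, (t + a * I + x : ℂ) = ((t + x : ℝ) : ℂ) + a * I := by
    intro a t; push_cast; ring
  simp only [zero_add] at h
  simp_rw [r, q] at h
  rw [integral_add_right_eq_self
      (fun t => nlbRes (-1) t x * nlbRes 1 t x * g ((t : ℂ) + (-1 : ℝ) * I)) x,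
    integral_add_right_eq_self
      (fun t => nlbRes 1 t x * nlbRes 3 t x * g ((t : ℂ) + (1 : ℝ) * I)) x] at h
  simp only [Fintype.sum_bool, nlbKer, mul_assoc]
  rw [integral_const_mul, integral_const_mul]
  simp only [nlbCc, nlbAl, if_true, Bool.false_eq_true, if_false]
  simp only [mul_assoc] at h
  norm_num at h ⊢
  rw [← mul_right_inj' nlb_kap_ne, ← h]
  field_simp [nlb_kap_ne]
  ring


section
variable {H : Type*} [NormedAddCommGroup H] [InnerProductSpace ℂ H] [CompleteSpace H]

lemma nlb_cont_cfc {X : Type*} [TopologicalSpace X] (N : H →L[ℂ] H) (hN : IsStarNormal N)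
    (Φ : X → ℂ → ℂ) (hΦ : Continuous (Function.uncurry Φ)) :
    Continuous (fun t => cfc (Φ t) N) := by
  have h1 : ∀ t, Continuous (Φ t) := fun t => hΦ.comp (by fun_prop : Continuous fun z => (t, z))
  have h2 : Continuous (fun y : X × spectrum ℂ N => Φ y.1 y.2) :=
    hΦ.comp (by fun_prop : Continuous fun y : X × spectrum ℂ N => (y.1, (y.2 : ℂ)))
  let f : C(X × spectrum ℂ N, ℂ) := ⟨_, h2⟩
  have h3 : ∀ t, cfc (Φ t) N = cfcHom (R := ℂ) hN (f.curry t) := by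
    intro t
    rw [cfc_apply (Φ t) N hN (h1 t).continuousOn]
    congr 1
  simp_rw [h3]
  exact (cfcHom_continuous hN).comp f.curry.continuous

lemma nlb_decay (p : ℂ → ℝ) (hpn : ∀ z, |p z| ≤ ‖z‖) (N : H →L[ℂ] H) :
    ∃ B : ℝ, 0 ≤ B ∧ ∀ t : ℝ, ∀ z ∈ spectrum ℂ N, (1 + (t - p z) ^ 2)⁻¹ ≤ B * (1 + t ^ 2)⁻¹ := by
  refine ⟨2 * (1 + (‖N‖ * ‖(1 : H →L[ℂ] H)‖) ^ 2), by positivity, fun t z hz => ?_⟩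
  have hz1 := (hpn z).trans (spectrum.norm_le_norm_mul_of_mem hz)
  set R := ‖N‖ * ‖(1 : H →L[ℂ] H)‖
  have hx : (p z) ^ 2 ≤ R ^ 2 := sq_le_sq' (by linarith [abs_le.1 hz1]) (abs_le.1 hz1).2
  set x := p z
  rw [← div_eq_mul_inv, inv_eq_one_div, div_le_div_iff₀ (by positivity) (by positivity)]
  have : 1 + t ^ 2 ≤ 2 * (1 + x ^ 2) * (1 + (t - x) ^ 2) := by
    nlinarith [sq_nonneg (t - 2 * x), mul_nonneg (sq_nonneg x) (sq_nonneg (t - x))]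
  have h3 : 0 ≤ (R ^ 2 - x ^ 2) * (1 + (t - x) ^ 2) := mul_nonneg (by linarith) (by positivity)
  nlinarith

lemma nlb_cfc_integral (p : ℂ → ℝ) (hpn : ∀ z, |p z| ≤ ‖z‖) (N : H →L[ℂ] H)
    (hN : IsStarNormal N) (Φ : ℝ → ℂ → ℂ) (hΦ : Continuous (Function.uncurry Φ)) (D : ℝ)
    (hD : 0 ≤ D) (hb : ∀ t z, ‖Φ t z‖ ≤ D * (1 + (t - p z) ^ 2)⁻¹) :
    Integrable (fun t => cfc (Φ t) N) ∧
      cfc (fun z => ∫ t, Φ t z) N = ∫ t, cfc (Φ t) N := by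
  obtain ⟨B, hB, hB2⟩ := nlb_decay p hpn N
  have hfin : HasFiniteIntegral (fun t : ℝ => D * (B * (1 + t ^ 2)⁻¹)) :=
    ((integrable_inv_one_add_sq.const_mul B).const_mul D).2
  have hbd : ∀ᵐ t : ℝ, ∀ z ∈ spectrum ℂ N, ‖Φ t z‖ ≤ D * (B * (1 + t ^ 2)⁻¹) :=
    .of_forall fun t z hz => (hb t z).trans (mul_le_mul_of_nonneg_left (hB2 t z hz) hD)
  exact ⟨integrable_cfc Φ _ N hΦ.continuousOn hbd hfin hN,
    cfc_integral Φ _ N hΦ.continuousOn hbd hfin hN⟩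

lemma nlb_norm_decay (p : ℂ → ℝ) (hpn : ∀ z, |p z| ≤ ‖z‖) (N : H →L[ℂ] H)
    (Φ : ℝ → ℂ → ℂ) (D : ℝ)
    (hD : 0 ≤ D) (hb : ∀ t z, ‖Φ t z‖ ≤ D * (1 + (t - p z) ^ 2)⁻¹) :
    ∃ B : ℝ, 0 ≤ B ∧ ∀ t, ‖cfc (Φ t) N‖ ≤ B * (1 + t ^ 2)⁻¹ := by
  obtain ⟨B, hB, hB2⟩ := nlb_decay p hpn N
  refine ⟨D * B, by positivity, fun t => norm_cfc_le (by positivity) fun z hz => ?_⟩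
  rw [mul_assoc]
  exact (hb t z).trans (mul_le_mul_of_nonneg_left (hB2 t z hz) hD)

lemma nlb_L2 (p : ℂ → ℝ) (hp : Continuous p) (hpn : ∀ z, |p z| ≤ ‖z‖) (N : H →L[ℂ] H)
    (hN : IsStarNormal N) (h : H) :
    Integrable (fun t : ℝ => ‖cfc (fun z => nlbRes 1 t (p z)) N h‖ ^ 2) ∧
      ∫ t : ℝ, ‖cfc (fun z => nlbRes 1 t (p z)) N h‖ ^ 2 = Real.pi * ‖h‖ ^ 2 := by
  have hc : ∀ t, Continuous (fun z => nlbRes 1 t (p z)) := fun t =>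
    nlb_res_cont (by norm_num) continuous_const hp
  let Φ : ℝ → ℂ → ℂ := fun t z => (((1 + (t - p z) ^ 2)⁻¹ : ℝ) : ℂ)
  have hΦ : Continuous (Function.uncurry Φ) := by
    refine Complex.continuous_ofReal.comp (Continuous.inv₀ ?_ fun y => by positivity)
    fun_prop
  obtain ⟨i1, i2⟩ := nlb_cfc_integral p hpn N hN Φ hΦ 1 zero_le_one (fun t z => by
    simp only [Φ, one_mul]
    rw [Complex.norm_real, Real.norm_of_nonneg (by positivity)])
  have i3 : (∫ t, cfc (Φ t) N) = (Real.pi : ℂ) • (1 : H →L[ℂ] H) := by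
    rw [← i2]
    have : (fun z => ∫ t, Φ t z) = fun _ => (Real.pi : ℂ) := by
      ext z
      simp only [Φ]
      have e0 : (∫ t : ℝ, (1 + (t - p z) ^ 2)⁻¹) = Real.pi := by
        rw [integral_sub_right_eq_self (fun t : ℝ => (1 + t ^ 2)⁻¹) (p z),
          integral_univ_inv_one_add_sq]
      exact (integral_ofReal (𝕜 := ℂ) (f := fun t : ℝ => (1 + (t - p z) ^ 2)⁻¹)).trans
        (congrArg _ e0)
    rw [this, cfc_const _ N hN, Algebra.algebraMap_eq_smul_one]
  let ℓ : (H →L[ℂ] H) →L[ℂ] ℂ := (innerSL ℂ h) ∘L (ContinuousLinearMap.apply ℂ H h)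
  have e : ∀ t : ℝ, ‖cfc (fun z => nlbRes 1 t (p z)) N h‖ ^ 2 = RCLike.re (ℓ (cfc (Φ t) N)) := by
    intro t
    have : Φ t = fun z => star (nlbRes 1 t (p z)) * nlbRes 1 t (p z) := by
      ext z
      simp only [Φ]
      have := nlb_res_sq_eq 1 t (p z)
      rw [one_pow] at this
      rw [← this, Complex.star_def, mul_comm, Complex.mul_conj, Complex.normSq_eq_norm_sq]
    rw [this, cfc_mul _ _ N (hc t).star.continuousOn (hc t).continuousOn, cfc_star]
    simp only [ℓ, ContinuousLinearMap.comp_apply, ContinuousLinearMap.apply_apply,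
      mul_apply_eq_comp, innerSL_apply_apply]
    rw [ContinuousLinearMap.star_eq_adjoint, ContinuousLinearMap.adjoint_inner_right]
    exact norm_sq_eq_re_inner (𝕜 := ℂ) _
  simp_rw [e]
  refine ⟨(ℓ.integrable_comp i1).re, ?_⟩
  rw [integral_re (ℓ.integrable_comp i1), ContinuousLinearMap.integral_comp_comm ℓ i1, i3]
  simp [ℓ, inner_self_eq_norm_sq_to_K]
  norm_cast

lemma nlb_dom (p : ℂ → ℝ) (hp : Continuous p) (N : H →L[ℂ] H) (t D : ℝ) (hD : 0 ≤ D)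
    (φ : ℂ → ℂ) (hφ : Continuous φ) (hb : ∀ z, ‖φ z‖ ≤ D * ‖nlbRes 1 t (p z)‖) (h : H) :
    ‖cfc φ N h‖ ≤ D * ‖cfc (fun z => nlbRes 1 t (p z)) N h‖ := by
  have hc : Continuous (fun z => nlbRes 1 t (p z)) :=
    nlb_res_cont (by norm_num) continuous_const hp
  have hne : ∀ z, nlbRes 1 t (p z) ≠ 0 := fun z => inv_ne_zero (nlb_den_ne (by norm_num) _ _)
  have : φ = fun z => (φ z * (nlbRes 1 t (p z))⁻¹) * nlbRes 1 t (p z) := by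
    ext z; field_simp [hne z]
  have hq : Continuous (fun z => φ z * (nlbRes 1 t (p z))⁻¹) := hφ.mul (hc.inv₀ hne)
  rw [this, cfc_mul (fun z => φ z * (nlbRes 1 t (p z))⁻¹) _ N hq.continuousOn hc.continuousOn,
    mul_apply_eq_comp]
  refine (ContinuousLinearMap.le_opNorm _ _).trans ?_
  gcongr
  refine norm_cfc_le hD fun z _ => ?_
  rw [norm_mul, norm_inv, ← div_eq_mul_inv, div_le_iff₀ (norm_pos_iff.2 (hne z))]
  exact hb z

lemma nlb_bil (p : ℂ → ℝ) (hp : Continuous p) (hpn : ∀ z, |p z| ≤ ‖z‖) (N₁ N₂ : H →L[ℂ] H)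
    (hN₁ : IsStarNormal N₁) (hN₂ : IsStarNormal N₂) (T : ℝ → (H →L[ℂ] H)) (D : ℝ) (hD : 0 ≤ D)
    (hT : ∀ t g h, ‖inner ℂ g (T t h)‖ ≤ D * ‖cfc (fun z => nlbRes 1 t (p z)) N₁ g‖ *
      ‖cfc (fun z => nlbRes 1 t (p z)) N₂ h‖) :
    ‖∫ t, T t‖ ≤ Real.pi * D := by
  by_cases hi : Integrable T
  swap
  · rw [integral_undef hi, norm_zero]; positivity
  have key : ∀ g h : H, ‖inner ℂ g ((∫ t, T t) h)‖ ≤ Real.pi * D * ((‖g‖ ^ 2 + ‖h‖ ^ 2) / 2) := by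
    intro g h
    let ℓ : (H →L[ℂ] H) →L[ℂ] ℂ := (innerSL ℂ g) ∘L (ContinuousLinearMap.apply ℂ H h)
    have e : inner ℂ g ((∫ t, T t) h) = ∫ t, inner ℂ g (T t h) :=
      (ContinuousLinearMap.integral_comp_comm ℓ hi).symm
    rw [e]
    obtain ⟨a1, a2⟩ := nlb_L2 p hp hpn N₁ hN₁ g
    obtain ⟨b1, b2⟩ := nlb_L2 p hp hpn N₂ hN₂ h
    refine (norm_integral_le_of_norm_le ((a1.add b1).const_mul (D / 2)) (.of_forall fun t => ?_)).trans
      (le_of_eq ?_)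
    · refine (hT t g h).trans ?_
      simp only [Pi.add_apply]
      nlinarith [mul_nonneg hD (sq_nonneg (‖cfc (fun z => nlbRes 1 t (p z)) N₁ g‖ -
        ‖cfc (fun z => nlbRes 1 t (p z)) N₂ h‖))]
    · rw [integral_const_mul]
      simp only [Pi.add_apply]
      rw [integral_add a1 b1, a2, b2]
      ring
  refine ContinuousLinearMap.opNorm_le_of_unit_norm (by positivity) fun h hh => ?_
  by_cases h0 : (∫ t, T t) h = 0
  · rw [h0, norm_zero]; positivity
  set y := (∫ t, T t) h
  have hy : 0 < ‖y‖ := norm_pos_iff.2 h0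
  have := key (((‖y‖⁻¹ : ℝ) : ℂ) • y) h
  have h1 : ‖((‖y‖⁻¹ : ℝ) : ℂ) • y‖ = 1 := by
    rw [norm_smul, Complex.norm_real, Real.norm_of_nonneg (by positivity)]
    field_simp
  rw [h1, hh, inner_smul_left, inner_self_eq_norm_sq_to_K] at this
  rw [norm_mul, Complex.conj_ofReal, Complex.norm_real, Real.norm_of_nonneg (by positivity)] at this
  have e2 : ‖((‖y‖ : ℂ)) ^ 2‖ = ‖y‖ ^ 2 := by simp
  erw [e2] at this
  have e3 : ‖y‖⁻¹ * ‖y‖ ^ 2 = ‖y‖ := by field_simp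
  rw [e3] at this
  linarith

lemma nlb_resolvent (p : ℂ → ℝ) (hp : Continuous p) (N₁ N₂ : H →L[ℂ] H)
    (hN₁ : IsStarNormal N₁) (hN₂ : IsStarNormal N₂) {α : ℝ} (hα : 1 ≤ |α|) (t : ℝ) :
    cfc (fun z => nlbRes α t (p z)) N₁ - cfc (fun z => nlbRes α t (p z)) N₂ =
      cfc (fun z => nlbRes α t (p z)) N₁ * (cfc (fun z => (p z : ℂ)) N₁ - cfc (fun z => (p z : ℂ)) N₂) *
        cfc (fun z => nlbRes α t (p z)) N₂ := by
  have hc : Continuous (fun z => nlbRes α t (p z)) := nlb_res_cont hα continuous_const hp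
  have hpc : Continuous (fun z => (p z : ℂ)) := by fun_prop
  have e : ∀ z, nlbRes α t (p z) * (p z : ℂ) = ((t : ℂ) + α * I) * nlbRes α t (p z) - 1 := by
    intro z
    have := nlb_den_ne hα t (p z)
    unfold nlbRes
    field_simp
    ring
  have m : ∀ N : H →L[ℂ] H, IsStarNormal N → cfc (fun z => nlbRes α t (p z)) N *
      cfc (fun z => (p z : ℂ)) N = ((t : ℂ) + α * I) • cfc (fun z => nlbRes α t (p z)) N - 1 := by
    intro N hN
    rw [← cfc_mul _ _ N hc.continuousOn hpc.continuousOn]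
    simp_rw [e]
    have hc2 : Continuous (fun z => ((t : ℂ) + α * I) * nlbRes α t (p z)) := continuous_const.mul hc
    rw [cfc_sub _ _ N hc2.continuousOn (by fun_prop), cfc_const_mul _ _ N hc.continuousOn,
      cfc_const_one ℂ N]
  have m1 := m N₁ hN₁
  have m2 := m N₂ hN₂
  rw [(cfc_commute_cfc _ _ N₂).eq] at m2
  rw [mul_sub, sub_mul, m1, mul_assoc, m2]
  simp [sub_mul, mul_sub]

lemma nlb_XKY (X K Y : H →L[ℂ] H) (g h : H) :
    ‖inner ℂ g ((X * K * Y) h)‖ ≤ ‖star X g‖ * ‖K‖ * ‖Y h‖ := by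
  simp only [mul_apply_eq_comp]
  rw [← ContinuousLinearMap.adjoint_inner_left, ContinuousLinearMap.star_eq_adjoint, mul_assoc]
  refine (norm_inner_le_norm _ _).trans ?_
  gcongr
  exact ContinuousLinearMap.le_opNorm _ _

lemma nlb_diff (p : ℂ → ℝ) (hp : Continuous p) (N₁ N₂ : H →L[ℂ] H)
    (hN₁ : IsStarNormal N₁) (hN₂ : IsStarNormal N₂) (s : Bool) (t : ℝ) (l r : ℂ → ℂ)
    (hl : Continuous l) (hr : Continuous r) (Dl Dr : ℝ) (hDl : ∀ z, ‖l z‖ ≤ Dl)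
    (hDr : ∀ z, ‖r z‖ ≤ Dr) (g h : H) :
    ‖inner ℂ g ((cfc l N₁ * (cfc (fun z => nlbKer s t (p z)) N₁ -
      cfc (fun z => nlbKer s t (p z)) N₂) * cfc r N₂) h)‖ ≤
    (2 * ‖nlbKap⁻¹‖ * Dl * Dr * ‖cfc (fun z => (p z : ℂ)) N₁ - cfc (fun z => (p z : ℂ)) N₂‖) *
      ‖cfc (fun z => nlbRes 1 t (p z)) N₁ g‖ * ‖cfc (fun z => nlbRes 1 t (p z)) N₂ h‖ := by
  have hDl0 : 0 ≤ Dl := (norm_nonneg _).trans (hDl 0)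
  have hDr0 : 0 ≤ Dr := (norm_nonneg _).trans (hDr 0)
  set K := cfc (fun z => (p z : ℂ)) N₁ - cfc (fun z => (p z : ℂ)) N₂ with hK
  let a : ℂ → ℂ := fun z => nlbRes (nlbAl s) t (p z)
  let b : ℂ → ℂ := fun z => nlbRes (nlbAl s + 2) t (p z)
  have ha : Continuous a := nlb_res_cont (nlb_al1 s) continuous_const hp
  have hb : Continuous b := nlb_res_cont (nlb_al2 s) continuous_const hp
  have hab : Continuous (fun z => a z * b z) := ha.mul hb
  have hla : Continuous (fun z => l z * a z) := hl.mul ha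
  have hlab : Continuous (fun z => l z * a z * b z) := hla.mul hb
  have hbr : Continuous (fun z => b z * r z) := hb.mul hr
  have habr : Continuous (fun z => a z * (b z * r z)) := ha.mul hbr
  have ra : cfc a N₁ - cfc a N₂ = cfc a N₁ * K * cfc a N₂ :=
    nlb_resolvent p hp N₁ N₂ hN₁ hN₂ (nlb_al1 s) t
  have rb : cfc b N₁ - cfc b N₂ = cfc b N₁ * K * cfc b N₂ :=
    nlb_resolvent p hp N₁ N₂ hN₁ hN₂ (nlb_al2 s) t
  have ek : ∀ N : H →L[ℂ] H, cfc (fun z => nlbKer s t (p z)) N = nlbCc s • (cfc a N * cfc b N) := by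
    intro N
    rw [← cfc_mul a b N ha.continuousOn hb.continuousOn,
      ← cfc_const_mul _ _ N hab.continuousOn]
    rfl
  have e1 : cfc l N₁ * (cfc (fun z => nlbKer s t (p z)) N₁ -
      cfc (fun z => nlbKer s t (p z)) N₂) * cfc r N₂ =
      nlbCc s • (cfc (fun z => l z * a z) N₁ * K * cfc (fun z => a z * (b z * r z)) N₂ +
        cfc (fun z => (l z * a z) * b z) N₁ * K * cfc (fun z => b z * r z) N₂) := by
    rw [ek, ek, cfc_mul _ _ N₁ hla.continuousOn hb.continuousOn,
      cfc_mul _ _ N₁ hl.continuousOn ha.continuousOn,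
      cfc_mul _ _ N₂ ha.continuousOn hbr.continuousOn,
      cfc_mul _ _ N₂ hb.continuousOn hr.continuousOn, ← smul_sub, mul_smul_comm, smul_mul_assoc]
    congr 1
    have : cfc a N₁ * cfc b N₁ - cfc a N₂ * cfc b N₂ =
        cfc a N₁ * (cfc b N₁ - cfc b N₂) + (cfc a N₁ - cfc a N₂) * cfc b N₂ := by noncomm_ring
    rw [this, ra, rb]
    noncomm_ring
  rw [e1]
  have na : ∀ z, ‖a z‖ ≤ ‖nlbRes 1 t (p z)‖ := fun z => nlb_res_le_res (nlb_al1 s) _ _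
  have nb : ∀ z, ‖b z‖ ≤ ‖nlbRes 1 t (p z)‖ := fun z => nlb_res_le_res (nlb_al2 s) _ _
  have nb1 : ∀ z, ‖b z‖ ≤ 1 := fun z => nlb_res_le_one (nlb_al2 s) _ _
  have x1 : ‖star (cfc (fun z => l z * a z) N₁) g‖ ≤
      Dl * ‖cfc (fun z => nlbRes 1 t (p z)) N₁ g‖ := by
    rw [← cfc_star]
    refine nlb_dom p hp N₁ t Dl hDl0 _ hla.star (fun z => ?_) g
    change ‖star (l z * a z)‖ ≤ _
    rw [norm_star, norm_mul]
    exact mul_le_mul (hDl z) (na z) (norm_nonneg _) hDl0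
  have x2 : ‖star (cfc (fun z => l z * a z * b z) N₁) g‖ ≤
      Dl * ‖cfc (fun z => nlbRes 1 t (p z)) N₁ g‖ := by
    rw [← cfc_star]
    refine nlb_dom p hp N₁ t Dl hDl0 _ hlab.star (fun z => ?_) g
    change ‖star (l z * a z * b z)‖ ≤ _
    rw [norm_star, norm_mul, norm_mul]
    refine (mul_le_of_le_one_right (by positivity) (nb1 z)).trans ?_
    exact mul_le_mul (hDl z) (na z) (norm_nonneg _) hDl0
  have y2 : ‖cfc (fun z => b z * r z) N₂ h‖ ≤
      Dr * ‖cfc (fun z => nlbRes 1 t (p z)) N₂ h‖ := by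
    refine nlb_dom p hp N₂ t Dr hDr0 _ hbr (fun z => ?_) h
    rw [norm_mul, mul_comm]
    exact mul_le_mul (hDr z) (nb z) (norm_nonneg _) hDr0
  have y1 : ‖cfc (fun z => a z * (b z * r z)) N₂ h‖ ≤
      Dr * ‖cfc (fun z => nlbRes 1 t (p z)) N₂ h‖ := by
    refine nlb_dom p hp N₂ t Dr hDr0 _ habr (fun z => ?_) h
    rw [norm_mul, norm_mul, mul_comm]
    refine mul_le_mul ?_ (na z) (norm_nonneg _) hDr0
    exact (mul_le_of_le_one_left (norm_nonneg _) (nb1 z)).trans (hDr z)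
  rw [smul_apply, inner_smul_right, norm_mul, nlb_cc,
    add_apply, inner_add_right]
  have z1 := nlb_XKY (cfc (fun z => l z * a z) N₁) K (cfc (fun z => a z * (b z * r z)) N₂) g h
  have z2 := nlb_XKY (cfc (fun z => l z * a z * b z) N₁) K (cfc (fun z => b z * r z) N₂) g h
  set G := ‖cfc (fun z => nlbRes 1 t (p z)) N₁ g‖
  set G' := ‖cfc (fun z => nlbRes 1 t (p z)) N₂ h‖
  have w1 := z1.trans (mul_le_mul (mul_le_mul_of_nonneg_right x1 (norm_nonneg K)) y1
    (norm_nonneg _) (by positivity))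
  have w2 := z2.trans (mul_le_mul (mul_le_mul_of_nonneg_right x2 (norm_nonneg K)) y2
    (norm_nonneg _) (by positivity))
  calc _ ≤ ‖nlbKap⁻¹‖ * ((Dl * G * ‖K‖ * (Dr * G')) + (Dl * G * ‖K‖ * (Dr * G'))) := by
        refine mul_le_mul_of_nonneg_left ?_ (norm_nonneg _)
        exact (norm_add_le _ _).trans (add_le_add w1 w2)
    _ = _ := by ring
end


lemma nlb_ker_cont (s : Bool) {X : Type*} [TopologicalSpace X] {f g : X → ℝ}
    (hf : Continuous f) (hg : Continuous g) : Continuous (fun y => nlbKer s (f y) (g y)) := by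
  unfold nlbKer
  exact continuous_const.mul ((nlb_res_cont (nlb_al1 s) hf hg).mul (nlb_res_cont (nlb_al2 s) hf hg))

lemma nlb_ker_le (s : Bool) (t x : ℝ) : ‖nlbKer s t x‖ ≤ ‖nlbKap⁻¹‖ * (1 + (t - x) ^ 2)⁻¹ := by
  unfold nlbKer
  rw [norm_mul, nlb_cc]
  exact mul_le_mul_of_nonneg_left (nlb_res_mul_le (nlb_al1 s) (nlb_al2 s) t x) (norm_nonneg _)

lemma nlb_strip (s : Bool) (t : ℝ) : |((t : ℂ) + nlbAl s * I).im| ≤ 1 := by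
  simpa using nlb_al1' s

section
variable {H : Type*} [NormedAddCommGroup H] [InnerProductSpace ℂ H] [CompleteSpace H]

set_option maxHeartbeats 1000000 in
lemma nlb_rep (p : ℂ → ℝ) (hp : Continuous p) (hpn : ∀ z, |p z| ≤ ‖z‖) (N : H →L[ℂ] H)
    (hN : IsStarNormal N) (g : ℂ → ℂ → ℂ) (hg : Continuous (Function.uncurry g))
    (hgd : ∀ z, Differentiable ℂ (fun ζ => g ζ z)) (C : ℝ)
    (hC : ∀ ζ z : ℂ, |ζ.im| ≤ 1 → ‖g ζ z‖ ≤ C) :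
    (∀ s, Integrable (fun t : ℝ => cfc (fun z => nlbKer s t (p z)) N *
      cfc (g (t + nlbAl s * I)) N)) ∧
    ∑ s : Bool, ∫ t : ℝ, cfc (fun z => nlbKer s t (p z)) N * cfc (g (t + nlbAl s * I)) N =
      cfc (fun z => g (p z) z) N := by
  have hC0 : 0 ≤ C := (norm_nonneg _).trans (hC 0 0 (by simp))
  let Φ : Bool → ℝ → ℂ → ℂ := fun s t z => nlbKer s t (p z) * g (t + nlbAl s * I) z
  have hgc : ∀ s : Bool, Continuous (fun y : ℝ × ℂ => g (y.1 + nlbAl s * I) y.2) := fun s =>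
    hg.comp (by fun_prop : Continuous fun y : ℝ × ℂ => ((y.1 : ℂ) + nlbAl s * I, y.2))
  have hgz : ∀ ζ, Continuous (g ζ) := fun ζ => hg.comp (by fun_prop : Continuous fun z => (ζ, z))
  have hkz : ∀ s t, Continuous (fun z => nlbKer s t (p z)) := fun s t =>
    nlb_ker_cont s continuous_const hp
  have hΦ : ∀ s, Continuous (Function.uncurry (Φ s)) := fun s =>
    (nlb_ker_cont s continuous_fst (hp.comp continuous_snd)).mul (hgc s)
  have hΦz : ∀ s t, Continuous (Φ s t) := fun s t => (hkz s t).mul (hgz _)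
  have hΦt : ∀ s z, Continuous (fun t => Φ s t z) := fun s z =>
    (nlb_ker_cont s continuous_id continuous_const).mul
      ((hgc s).comp (by fun_prop : Continuous fun t : ℝ => (t, z)))
  have hb : ∀ s t z, ‖Φ s t z‖ ≤ (‖nlbKap⁻¹‖ * C) * (1 + (t - p z) ^ 2)⁻¹ := by
    intro s t z
    simp only [Φ]
    rw [norm_mul, mul_right_comm]
    exact mul_le_mul (nlb_ker_le s t _) (hC _ z (nlb_strip s t)) (norm_nonneg _) (by positivity)
  have hmul : ∀ s t, cfc (Φ s t) N = cfc (fun z => nlbKer s t (p z)) N *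
      cfc (g (t + nlbAl s * I)) N := fun s t =>
    cfc_mul _ _ N (hkz s t).continuousOn (hgz _).continuousOn
  have hint : ∀ s, Integrable (fun t => cfc (Φ s t) N) := fun s =>
    (nlb_cfc_integral p hpn N hN (Φ s) (hΦ s) _ (by positivity) (hb s)).1
  simp_rw [← hmul]
  refine ⟨hint, ?_⟩
  rw [← integral_finsetSum _ (fun s _ => hint s)]
  have hs : ∀ t, ∑ s : Bool, cfc (Φ s t) N = cfc (fun z => ∑ s : Bool, Φ s t z) N := fun t =>
    (cfc_sum_univ (fun s => Φ s t) N (fun s => (hΦz s t).continuousOn)).symm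
  simp_rw [hs]
  have h2 := nlb_cfc_integral p hpn N hN (fun t z => ∑ s : Bool, Φ s t z)
    (continuous_finsetSum _ fun s _ => hΦ s)
    (‖nlbKap⁻¹‖ * C + ‖nlbKap⁻¹‖ * C) (by positivity) (fun t z => by
      rw [Fintype.sum_bool, add_mul]
      exact (norm_add_le _ _).trans (add_le_add (hb _ t z) (hb _ t z)))
  rw [← h2.2]
  congr 1
  ext z
  rw [integral_finsetSum]
  · exact nlb_scalar (fun ζ => g ζ z) (hgd z) C (fun ζ hζ => hC ζ z hζ) (p z)
  · intro s _
    refine Integrable.mono' ((nlb_shift_integrable (p z)).const_mul (‖nlbKap⁻¹‖ * C))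
      (hΦt s z).aestronglyMeasurable (.of_forall fun t => hb s t z)

lemma nlb_rep_const (p : ℂ → ℝ) (hp : Continuous p) (hpn : ∀ z, |p z| ≤ ‖z‖) (N : H →L[ℂ] H)
    (hN : IsStarNormal N) (g : ℂ → ℂ)
    (hgd : Differentiable ℂ g) (C : ℝ)
    (hC : ∀ ζ : ℂ, |ζ.im| ≤ 1 → ‖g ζ‖ ≤ C) :
    (∀ s, Integrable (fun t : ℝ => g (t + nlbAl s * I) • cfc (fun z => nlbKer s t (p z)) N)) ∧
    ∑ s : Bool, ∫ t : ℝ, g (t + nlbAl s * I) • cfc (fun z => nlbKer s t (p z)) N =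
      cfc (fun z => g (p z)) N := by
  have := nlb_rep p hp hpn N hN (fun ζ _ => g ζ) (hgd.continuous.comp continuous_fst)
    (fun _ => hgd) C (fun ζ _ h => hC ζ h)
  simp_rw [cfc_const _ N hN, Algebra.algebraMap_eq_smul_one, mul_smul_comm, mul_one] at this
  exact this

lemma nlb_fubini (A B : Bool → ℝ → (H →L[ℂ] H)) (hA : ∀ s, Continuous (A s))
    (hB : ∀ s, Continuous (B s)) (hA' : ∀ s, ∃ a, ∀ t, ‖A s t‖ ≤ a * (1 + t ^ 2)⁻¹)
    (hB' : ∀ s, ∃ a, ∀ t, ‖B s t‖ ≤ a * (1 + t ^ 2)⁻¹)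
    (φ : Bool → Bool → ℝ → ℝ → ℂ) (hφ : ∀ s r, Continuous (fun y : ℝ × ℝ => φ s r y.1 y.2))
    (C : ℝ) (hC : ∀ s r t τ, ‖φ s r t τ‖ ≤ C) 
    (iA : ∀ s r τ, Integrable (fun t => φ s r t τ • A s t))
    (iB : ∀ s r t, Integrable (fun τ => φ s r t τ • B r τ)) :
    ∑ s, ∫ t, A s t * (∑ r, ∫ τ, φ s r t τ • B r τ) =
      ∑ r, ∫ τ, (∑ s, ∫ t, φ s r t τ • A s t) * B r τ := by
  have hC0 : 0 ≤ C := (norm_nonneg _).trans (hC true true 0 0)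
  have hI : ∀ s r, Integrable (fun y : ℝ × ℝ => φ s r y.1 y.2 • (A s y.1 * B r y.2))
      (volume.prod volume) := by
    intro s r
    obtain ⟨a, ha⟩ := hA' s
    obtain ⟨b, hb⟩ := hB' r
    refine Integrable.mono' (((integrable_inv_one_add_sq.const_mul a).mul_prod
      (integrable_inv_one_add_sq.const_mul b)).const_mul C)
      (Continuous.aestronglyMeasurable ?_) (.of_forall fun y => ?_)
    · exact (hφ s r).smul (((hA s).comp continuous_fst).mul ((hB r).comp continuous_snd))
    · rw [norm_smul]
      refine mul_le_mul (hC _ _ _ _) ((norm_mul_le _ _).trans ?_) (norm_nonneg _) hC0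
      exact mul_le_mul (ha _) (hb _) (norm_nonneg _) ((norm_nonneg _).trans (ha _))
  have e1 : ∀ s t, A s t * (∑ r, ∫ τ, φ s r t τ • B r τ) =
      ∑ r, ∫ τ, φ s r t τ • (A s t * B r τ) := by
    intro s t
    rw [Finset.mul_sum]
    refine Finset.sum_congr rfl fun r _ => ?_
    rw [← integral_const_mul_of_integrable (iB s r t)]
    simp_rw [mul_smul_comm]
  have e2 : ∀ r τ, (∑ s, ∫ t, φ s r t τ • A s t) * B r τ =
      ∑ s, ∫ t, φ s r t τ • (A s t * B r τ) := by
    intro r τ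
    rw [Finset.sum_mul]
    refine Finset.sum_congr rfl fun s _ => ?_
    rw [← integral_mul_const_of_integrable (iA s r τ)]
    simp_rw [smul_mul_assoc]
  simp_rw [e1, e2]
  have f1 : ∀ s, ∫ t, ∑ r, ∫ τ, φ s r t τ • (A s t * B r τ) =
      ∑ r, ∫ t, ∫ τ, φ s r t τ • (A s t * B r τ) := fun s =>
    integral_finsetSum _ fun r _ => (hI s r).integral_prod_left
  have f2 : ∀ r, ∫ τ, ∑ s, ∫ t, φ s r t τ • (A s t * B r τ) =
      ∑ s, ∫ τ, ∫ t, φ s r t τ • (A s t * B r τ) := fun r =>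
    integral_finsetSum _ fun s _ => (hI s r).integral_prod_right
  simp_rw [f1, f2]
  rw [Finset.sum_comm]
  refine Finset.sum_congr rfl fun r _ => Finset.sum_congr rfl fun s _ => ?_
  exact integral_integral_swap (hI s r)

lemma nlb_int_mul (A Q : ℝ → (H →L[ℂ] H)) (hA : Continuous A) (hQ : Continuous Q)
    (hA' : ∃ a, ∀ t, ‖A t‖ ≤ a * (1 + t ^ 2)⁻¹) (C : ℝ) (hC : ∀ t, ‖Q t‖ ≤ C) :
    Integrable (fun t => A t * Q t) ∧ Integrable (fun t => Q t * A t) := by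
  obtain ⟨a, ha⟩ := hA'
  have hC0 : 0 ≤ C := (norm_nonneg _).trans (hC 0)
  constructor
  · refine Integrable.mono' ((integrable_inv_one_add_sq.const_mul a).mul_const C)
      (Continuous.aestronglyMeasurable (hA.mul hQ)) (.of_forall fun t => ?_)
    exact (norm_mul_le _ _).trans
      (mul_le_mul (ha _) (hC _) (norm_nonneg _) ((norm_nonneg _).trans (ha _)))
  · refine Integrable.mono' ((integrable_inv_one_add_sq.const_mul a).const_mul C)
      (Continuous.aestronglyMeasurable (hQ.mul hA)) (.of_forall fun t => ?_)
    exact (norm_mul_le _ _).trans (mul_le_mul (hC _) (ha _) (norm_nonneg _) hC0)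

lemma nlb_re_le (N₁ N₂ : H →L[ℂ] H) (hN₁ : IsStarNormal N₁) (hN₂ : IsStarNormal N₂) :
    ‖cfc (fun z : ℂ => (z.re : ℂ)) N₁ - cfc (fun z : ℂ => (z.re : ℂ)) N₂‖ ≤ ‖N₁ - N₂‖ := by
  have h := realPart.norm_le (N₁ - N₂)
  rw [map_sub] at h
  rw [cfc_re_id N₁, cfc_re_id N₂]
  exact h

lemma nlb_im_le (N₁ N₂ : H →L[ℂ] H) (hN₁ : IsStarNormal N₁) (hN₂ : IsStarNormal N₂) :
    ‖cfc (fun z : ℂ => (z.im : ℂ)) N₁ - cfc (fun z : ℂ => (z.im : ℂ)) N₂‖ ≤ ‖N₁ - N₂‖ := by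
  have h := imaginaryPart.norm_le (N₁ - N₂)
  rw [map_sub] at h
  rw [cfc_im_id N₁, cfc_im_id N₂]
  exact h

set_option maxHeartbeats 1000000 in
lemma nlb_unit (F : ℂ × ℂ → ℂ) (hF : Differentiable ℂ F) (M : ℝ) (hM : 0 ≤ M)
    (hb : ∀ z : ℂ × ℂ, ‖F z‖ ≤ M * Real.exp (|z.1.im| + |z.2.im|))
    (N₁ N₂ : H →L[ℂ] H) (hN₁ : IsStarNormal N₁) (hN₂ : IsStarNormal N₂) :
    ‖cfc (fun z : ℂ => F ((z.re : ℂ), (z.im : ℂ))) N₁ -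
      cfc (fun z : ℂ => F ((z.re : ℂ), (z.im : ℂ))) N₂‖ ≤
      (8 * Real.pi * Real.exp 1 * ‖nlbKap⁻¹‖) * M * ‖N₁ - N₂‖ := by
  have hFc := hF.continuous
  have b2 : ∀ ζ η : ℂ, |ζ.im| ≤ 1 → |η.im| ≤ 1 → ‖F (ζ, η)‖ ≤ M * Real.exp 2 := fun ζ η h1 h2 =>
    (hb _).trans (by gcongr; simp only; linarith)
  have bl : ∀ (ζ : ℂ) (y : ℝ), |ζ.im| ≤ 1 → ‖F (ζ, y)‖ ≤ M * Real.exp 1 := fun ζ y h1 =>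
    (hb _).trans (by gcongr; simpa using h1)
  have br : ∀ (x : ℝ) (η : ℂ), |η.im| ≤ 1 → ‖F (x, η)‖ ≤ M * Real.exp 1 := fun x η h1 =>
    (hb _).trans (by gcongr; simpa using h1)
  have dl : ∀ η, Differentiable ℂ (fun ζ => F (ζ, η)) := fun η => hF.comp (by fun_prop)
  have dr : ∀ ζ, Differentiable ℂ (fun η => F (ζ, η)) := fun ζ => hF.comp (by fun_prop)
  have hre : Continuous Complex.re := Complex.continuous_re
  have him : Continuous Complex.im := Complex.continuous_im
  have nre : ∀ z : ℂ, |z.re| ≤ ‖z‖ := Complex.abs_re_le_norm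
  have nim : ∀ z : ℂ, |z.im| ≤ ‖z‖ := Complex.abs_im_le_norm
  let A : (H →L[ℂ] H) → Bool → ℝ → (H →L[ℂ] H) := fun N s t => cfc (fun z => nlbKer s t z.re) N
  let B : (H →L[ℂ] H) → Bool → ℝ → (H →L[ℂ] H) := fun N s t => cfc (fun z => nlbKer s t z.im) N
  let P : Bool → ℝ → (H →L[ℂ] H) := fun s t => cfc (fun z => F (z.re, t + nlbAl s * I)) N₁
  let Q : Bool → ℝ → (H →L[ℂ] H) := fun s t => cfc (fun z => F (t + nlbAl s * I, z.im)) N₂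
  have cA : ∀ N, IsStarNormal N → ∀ s, Continuous (A N s) := fun N hN s =>
    nlb_cont_cfc N hN _ (nlb_ker_cont s continuous_fst (hre.comp continuous_snd))
  have cB : ∀ N, IsStarNormal N → ∀ s, Continuous (B N s) := fun N hN s =>
    nlb_cont_cfc N hN _ (nlb_ker_cont s continuous_fst (him.comp continuous_snd))
  have cP : ∀ s, Continuous (P s) := fun s => nlb_cont_cfc N₁ hN₁ _ (hFc.comp (by fun_prop :
    Continuous fun y : ℝ × ℂ => ((y.2.re : ℂ), (y.1 : ℂ) + nlbAl s * I)))
  have cQ : ∀ s, Continuous (Q s) := fun s => nlb_cont_cfc N₂ hN₂ _ (hFc.comp (by fun_prop :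
    Continuous fun y : ℝ × ℂ => ((y.1 : ℂ) + nlbAl s * I, (y.2.im : ℂ))))
  have bA : ∀ N s, ∃ a, ∀ t, ‖A N s t‖ ≤ a * (1 + t ^ 2)⁻¹ := fun N s => by
    obtain ⟨a, -, h⟩ := nlb_norm_decay Complex.re nre N (fun t z => nlbKer s t z.re) _
      (norm_nonneg _) (fun t z => nlb_ker_le s t z.re)
    exact ⟨a, h⟩
  have bB : ∀ N s, ∃ a, ∀ t, ‖B N s t‖ ≤ a * (1 + t ^ 2)⁻¹ := fun N s => by
    obtain ⟨a, -, h⟩ := nlb_norm_decay Complex.im nim N (fun t z => nlbKer s t z.im) _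
      (norm_nonneg _) (fun t z => nlb_ker_le s t z.im)
    exact ⟨a, h⟩
  have bP : ∀ s t, ‖P s t‖ ≤ M * Real.exp 1 := fun s t =>
    norm_cfc_le (by positivity) fun z _ => br _ _ (nlb_strip s t)
  have bQ : ∀ s t, ‖Q s t‖ ≤ M * Real.exp 1 := fun s t =>
    norm_cfc_le (by positivity) fun z _ => bl _ _ (nlb_strip s t)
  -- the two representations
  have r2 : ∑ s, ∫ t, A N₂ s t * Q s t = cfc (fun z : ℂ => F ((z.re : ℂ), (z.im : ℂ))) N₂ :=
    (nlb_rep Complex.re hre nre N₂ hN₂ (fun ζ z => F (ζ, z.im)) (hFc.comp (by fun_prop :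
      Continuous fun y : ℂ × ℂ => (y.1, (y.2.im : ℂ)))) (fun z => dl _) _
      (fun ζ z h => bl ζ z.im h)).2
  have r1 : ∑ s, ∫ t, P s t * B N₁ s t = cfc (fun z : ℂ => F ((z.re : ℂ), (z.im : ℂ))) N₁ := by
    have := (nlb_rep Complex.im him nim N₁ hN₁ (fun ζ z => F (z.re, ζ)) (hFc.comp (by fun_prop :
      Continuous fun y : ℂ × ℂ => ((y.2.re : ℂ), y.1))) (fun z => dr _) _
      (fun ζ z h => br z.re ζ h)).2
    rw [← this]
    refine Finset.sum_congr rfl fun s _ => ?_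
    congr 1
    ext1 t
    exact (cfc_commute_cfc _ _ N₁).eq
  let φ : Bool → Bool → ℝ → ℝ → ℂ := fun s r t τ => F (t + nlbAl s * I, τ + nlbAl r * I)
  have rQ : ∀ s t, (∀ r, Integrable (fun τ => φ s r t τ • B N₂ r τ)) ∧
      ∑ r, ∫ τ, φ s r t τ • B N₂ r τ = Q s t := fun s t =>
    nlb_rep_const Complex.im him nim N₂ hN₂ (fun η => F (t + nlbAl s * I, η)) (dr _) _
      (fun η h => b2 _ η (nlb_strip s t) h)
  have rP : ∀ r τ, (∀ s, Integrable (fun t => φ s r t τ • A N₁ s t)) ∧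
      ∑ s, ∫ t, φ s r t τ • A N₁ s t = P r τ := fun r τ =>
    nlb_rep_const Complex.re hre nre N₁ hN₁ (fun ζ => F (ζ, τ + nlbAl r * I)) (dl _) _
      (fun ζ h => b2 ζ _ h (nlb_strip r τ))
  have hC : ∑ s, ∫ t, A N₁ s t * Q s t = ∑ r, ∫ τ, P r τ * B N₂ r τ := by
    have := nlb_fubini (A N₁) (B N₂) (cA N₁ hN₁) (cB N₂ hN₂) (bA N₁) (bB N₂) φ
      (fun s r => hFc.comp (by fun_prop : Continuous fun y : ℝ × ℝ =>
        ((y.1 : ℂ) + nlbAl s * I, (y.2 : ℂ) + nlbAl r * I))) _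
      (fun s r t τ => b2 _ _ (nlb_strip s t) (nlb_strip r τ))
      (fun s r τ => (rP r τ).1 s) (fun s r t => (rQ s t).1 r)
    simp_rw [fun s t => (rQ s t).2, fun r τ => (rP r τ).2] at this
    exact this
  have iAQ : ∀ N, IsStarNormal N → ∀ s, Integrable (fun t => A N s t * Q s t) := fun N hN s =>
    (nlb_int_mul (A N s) (Q s) (cA N hN s) (cQ s) (bA N s) _ (bQ s)).1
  have iPB : ∀ N, IsStarNormal N → ∀ s, Integrable (fun t => P s t * B N s t) := fun N hN s =>
    (nlb_int_mul (B N s) (P s) (cB N hN s) (cP s) (bB N s) _ (bP s)).2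
  have split : cfc (fun z : ℂ => F ((z.re : ℂ), (z.im : ℂ))) N₁ -
      cfc (fun z : ℂ => F ((z.re : ℂ), (z.im : ℂ))) N₂ =
      (∑ s, ∫ t, P s t * (B N₁ s t - B N₂ s t) * 1) +
        ∑ s, ∫ t, 1 * (A N₁ s t - A N₂ s t) * Q s t := by
    have q1 : ∀ s, ∫ t, P s t * (B N₁ s t - B N₂ s t) * 1 =
        (∫ t, P s t * B N₁ s t) - ∫ t, P s t * B N₂ s t := fun s => by
      rw [← integral_sub (iPB N₁ hN₁ s) (iPB N₂ hN₂ s)]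
      simp_rw [mul_one, mul_sub]
    have q2 : ∀ s, ∫ t, 1 * (A N₁ s t - A N₂ s t) * Q s t =
        (∫ t, A N₁ s t * Q s t) - ∫ t, A N₂ s t * Q s t := fun s => by
      rw [← integral_sub (iAQ N₁ hN₁ s) (iAQ N₂ hN₂ s)]
      simp_rw [one_mul, sub_mul]
    simp_rw [q1, q2, Finset.sum_sub_distrib]
    rw [hC, r1, r2]
    abel
  rw [split]
  set K := ‖N₁ - N₂‖
  have e1 : ∀ s, ‖∫ t, P s t * (B N₁ s t - B N₂ s t) * 1‖ ≤
      Real.pi * (2 * ‖nlbKap⁻¹‖ * (M * Real.exp 1) * 1 * K) := by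
    intro s
    refine nlb_bil Complex.im him nim N₁ N₂ hN₁ hN₂ _ _ (by positivity) fun t g h => ?_
    have := nlb_diff Complex.im him N₁ N₂ hN₁ hN₂ s t (fun z => F (z.re, t + nlbAl s * I))
      (fun _ => 1) (hFc.comp (by fun_prop)) continuous_const (M * Real.exp 1) 1
      (fun z => br _ _ (nlb_strip s t)) (fun _ => by simp) g h
    rw [cfc_const_one ℂ N₂] at this
    refine this.trans ?_
    gcongr
    exact nlb_im_le N₁ N₂ hN₁ hN₂
  have e2 : ∀ s, ‖∫ t, 1 * (A N₁ s t - A N₂ s t) * Q s t‖ ≤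
      Real.pi * (2 * ‖nlbKap⁻¹‖ * 1 * (M * Real.exp 1) * K) := by
    intro s
    refine nlb_bil Complex.re hre nre N₁ N₂ hN₁ hN₂ _ _ (by positivity) fun t g h => ?_
    have := nlb_diff Complex.re hre N₁ N₂ hN₁ hN₂ s t (fun _ => 1)
      (fun z => F (t + nlbAl s * I, z.im)) continuous_const (hFc.comp (by fun_prop)) 1
      (M * Real.exp 1) (fun _ => by simp) (fun z => bl _ _ (nlb_strip s t)) g h
    rw [cfc_const_one ℂ N₁] at this
    refine this.trans ?_
    gcongr
    exact nlb_re_le N₁ N₂ hN₁ hN₂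
  simp only [Fintype.sum_bool]
  refine (norm_add_le _ _).trans ((add_le_add ((norm_add_le _ _).trans (add_le_add (e1 _) (e1 _)))
    ((norm_add_le _ _).trans (add_le_add (e2 _) (e2 _)))).trans (le_of_eq ?_))
  ring

lemma nlb_scaled (F : ℂ × ℂ → ℂ) (hF : Differentiable ℂ F) (σ M : ℝ) (hσ : 0 < σ) (hM : 0 ≤ M)
    (hb : ∀ z : ℂ × ℂ, ‖F z‖ ≤ M * Real.exp (σ * (|z.1.im| + |z.2.im|)))
    (N₁ N₂ : H →L[ℂ] H) (hN₁ : IsStarNormal N₁) (hN₂ : IsStarNormal N₂) :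
    ‖cfc (fun z : ℂ => F ((z.re : ℂ), (z.im : ℂ))) N₁ -
      cfc (fun z : ℂ => F ((z.re : ℂ), (z.im : ℂ))) N₂‖ ≤
      (8 * Real.pi * Real.exp 1 * ‖nlbKap⁻¹‖) * σ * M * ‖N₁ - N₂‖ := by
  let F' : ℂ × ℂ → ℂ := fun z => F (((σ⁻¹ : ℝ) : ℂ) * z.1, ((σ⁻¹ : ℝ) : ℂ) * z.2)
  have hF' : Differentiable ℂ F' := hF.comp (by fun_prop)
  have hb' : ∀ z : ℂ × ℂ, ‖F' z‖ ≤ M * Real.exp (|z.1.im| + |z.2.im|) := by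
    intro z
    refine (hb _).trans (le_of_eq ?_)
    simp only [Complex.im_ofReal_mul, abs_mul, abs_of_pos (inv_pos.2 hσ)]
    congr 2
    field_simp
  have nn : ∀ N : H →L[ℂ] H, IsStarNormal N → IsStarNormal ((σ : ℂ) • N) := fun N hN => by
    infer_instance
  have key : ∀ N : H →L[ℂ] H, IsStarNormal N → cfc (fun z : ℂ => F ((z.re : ℂ), (z.im : ℂ))) N =
      cfc (fun z : ℂ => F' ((z.re : ℂ), (z.im : ℂ))) ((σ : ℂ) • N) := by
    intro N hN
    have hc : Continuous (fun z : ℂ => F' ((z.re : ℂ), (z.im : ℂ))) :=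
      hF'.continuous.comp (by fun_prop)
    rw [← cfc_comp_smul (σ : ℂ) (fun z : ℂ => F' ((z.re : ℂ), (z.im : ℂ))) N hc.continuousOn hN]
    congr 1
    ext z
    have hne : (σ : ℂ) ≠ 0 := by exact_mod_cast hσ.ne'
    simp [F', hne]
  rw [key N₁ hN₁, key N₂ hN₂]
  refine (nlb_unit F' hF' M hM hb' _ _ (nn _ hN₁) (nn _ hN₂)).trans (le_of_eq ?_)
  rw [← smul_sub, norm_smul, Complex.norm_real, Real.norm_of_nonneg hσ.le]
  ring
end

end


/-- Operator Lipschitz estimate for normal operators and functions bandlimited on `ℝ²`: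
there is an absolute constant `c > 0` such that if `F : ℂ² → ℂ` is entire with
`|F(z₁,z₂)| ≤ M·exp(σ(|Im z₁| + |Im z₂|))` and `f : ℂ → ℂ` is defined by
`f(x + iy) = F(x, y)`, then for all bounded normal operators `N₁, N₂`,
`‖f(N₁) − f(N₂)‖ ≤ c·σ·M·‖N₁ − N₂‖`, where `f(N)` is given by the continuous
functional calculus for normal operators. -/
theorem normal_operator_lipschitz_bandlimited :
    ∃ c : ℝ, 0 < c ∧
      ∀ (H : Type*) [NormedAddCommGroup H] [InnerProductSpace ℂ H] [CompleteSpace H],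
      ∀ (σ M : ℝ), 0 < σ → 0 < M →
      ∀ (F : ℂ × ℂ → ℂ), Differentiable ℂ F →
        (∀ z : ℂ × ℂ, ‖F z‖ ≤ M * Real.exp (σ * (|z.1.im| + |z.2.im|))) →
      ∀ (N₁ N₂ : H →L[ℂ] H), IsStarNormal N₁ → IsStarNormal N₂ →
        ‖cfc (fun z : ℂ => F ((z.re : ℂ), (z.im : ℂ))) N₁ -
            cfc (fun z : ℂ => F ((z.re : ℂ), (z.im : ℂ))) N₂‖
          ≤ c * σ * M * ‖N₁ - N₂‖ := by
  refine ⟨8 * Real.pi * Real.exp 1 * ‖nlbKap⁻¹‖, ?_, ?_⟩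
  · have := norm_pos_iff.2 (inv_ne_zero nlb_kap_ne)
    have := Real.pi_pos
    positivity
  · intro H _ _ _ σ M hσ hM F hF hb N₁ N₂ hN₁ hN₂
    exact nlb_scaled F hF σ M hσ hM.le hb N₁ N₂ hN₁ hN₂
end
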